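/- arXiv:2402.03249 — 3 statements merged into one kernel-verified Lean document; each statement's English description precedes it below -/
import Mathlib

section
/- Let β ∈ (0,1) and for each n let X ~ P_{β,Q^{CW}} be a Curie–Weiss Ising vector on {−1,1}^n. Then √n · X̄_n converges in distribution to N(0, 1/(1−β)). -/
open MeasureTheory ProbabilityTheory Filter Topology Matrix

noncomputable section

/-- The `±1` configuration associated to a boolean configuration. -/
def pmVec {ι : Type*} (s : ι → Bool) : ι → ℝ := fun i => if s i then 1 else -1

/-- Unnormalized Ising weight `exp((β/2) zᵀ Q z)`. -/
def isingWeight {ι : Type*} [Fintype ι] (β : ℝ) (Q : Matrix ι ι ℝ) (z : ι → ℝ) : ℝ :=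
  Real.exp (β / 2 * (z ⬝ᵥ Q.mulVec z))

/-- Ising partition function `Z(β,Q)`. -/
def isingZ (ι : Type*) [Fintype ι] [DecidableEq ι] (β : ℝ) (Q : Matrix ι ι ℝ) : ℝ :=
  ∑ s : ι → Bool, isingWeight β Q (pmVec s)

/-- The Ising probability measure `P_{β,Q}` on `{±1}^ι ⊆ ℝ^ι`:
`P(z) = exp((β/2) zᵀQz) / Z(β,Q)`. -/
def isingMeasure (ι : Type*) [Fintype ι] [DecidableEq ι] (β : ℝ) (Q : Matrix ι ι ℝ) :
    Measure (ι → ℝ) :=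
  ∑ s : ι → Bool,
    ENNReal.ofReal (isingWeight β Q (pmVec s) / isingZ ι β Q) • Measure.dirac (pmVec s)

/-- Sample mean `X̄ = (1/n) Σ_i X_i`. -/
def sampleMean {ι : Type*} [Fintype ι] (x : ι → ℝ) : ℝ := (∑ i, x i) / (Fintype.card ι : ℝ)

/-- Sample covariance `T_n = (1/n) Σ_i (X_i - X̄)(Y_i - Ȳ)`. -/
def sampleCov {ι : Type*} [Fintype ι] (x y : ι → ℝ) : ℝ :=
  (∑ i, (x i - sampleMean x) * (y i - sampleMean y)) / (Fintype.card ι : ℝ)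

/-- Convergence in distribution: weak convergence of the laws, tested against
bounded continuous functions. -/
def TendstoInDistribution (μ : ℕ → Measure ℝ) (ν : Measure ℝ) : Prop :=
  ∀ f : BoundedContinuousFunction ℝ ℝ,
    Tendsto (fun n => ∫ x, f x ∂(μ n)) atTop (𝓝 (∫ x, f x ∂ν))

/-- The Curie–Weiss interaction matrix `Q^{CW} = (1/n)(11ᵀ - I)`. -/
def QCW (n : ℕ) : Matrix (Fin n) (Fin n) ℝ := fun i j => if i = j then 0 else (n : ℝ)⁻¹

/-- `m(β)`: equal to `0` for `β ≤ 1`, and to the unique positive root of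
`m = tanh(β m)` for `β > 1`. -/
def isingMag (β : ℝ) : ℝ := sSup {m : ℝ | 0 ≤ m ∧ m = Real.tanh (β * m)}

/-!
Write `W = S / √n` for the normalised sum of the spins. Since `zᵀ Q^{CW} z = W² - 1` on `{±1}ⁿ`, the
characteristic function of `√n X̄ₙ = W` at `t` is `Zₙ(it) / Zₙ(0)`, where
`Zₙ(u) = ∑ exp (β W² / 2 + u W)`. Let `c² = β` and let `G` be a standard Gaussian. Replacing
`exp (β W² / 2)` by `𝔼 exp (c G W)` (Hubbard–Stratonovich) decouples the spins:
`Zₙ(u) = 2ⁿ 𝔼 cosh ((c G + u) / √n) ^ n`. The integrand converges to `exp ((c G + u)² / 2)` and is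
dominated by `exp ((Re (c G + u))² / 2)`, which is integrable because `(Re c)² < 1`. A Gaussian
integral then gives `Zₙ(u) / Zₙ(0) → exp (u² / (2 (1 - β)))`. Taking `c` complex allows `β < 0`.
-/

lemma tendstoInDistribution_of_tendsto_charFun {μ : ℕ → Measure ℝ} {ν : Measure ℝ}
    [hμ : ∀ n, IsProbabilityMeasure (μ n)] [hν : IsProbabilityMeasure ν]
    (h : ∀ t, Tendsto (fun n => charFun (μ n) t) atTop (𝓝 (charFun ν t))) :
    TendstoInDistribution μ ν := by
  let law (n : ℕ) : ProbabilityMeasure ℝ := ⟨μ n, hμ n⟩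
  let limit : ProbabilityMeasure ℝ := ⟨ν, hν⟩
  have tendsto_law : Tendsto law atTop (𝓝 limit) :=
    ProbabilityMeasure.tendsto_iff_tendsto_charFun.mpr h
  exact ProbabilityMeasure.tendsto_iff_forall_integral_tendsto.mp tendsto_law

section IsingMeasure

variable {ι : Type*} [Fintype ι] (β : ℝ) (Q : Matrix ι ι ℝ)

lemma isingWeight_pos (z : ι → ℝ) : 0 < isingWeight β Q z := Real.exp_pos _

variable [DecidableEq ι]

lemma isingZ_pos : 0 < isingZ ι β Q :=
  Finset.sum_pos (fun _ _ => isingWeight_pos β Q _) Finset.univ_nonempty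

lemma isingWeight_div_isingZ_nonneg (z : ι → ℝ) : 0 ≤ isingWeight β Q z / isingZ ι β Q :=
  div_nonneg (isingWeight_pos β Q z).le (isingZ_pos β Q).le

instance isProbabilityMeasure_isingMeasure : IsProbabilityMeasure (isingMeasure ι β Q) where
  measure_univ := by
    simp only [isingMeasure, Measure.coe_finsetSum, Finset.sum_apply, Measure.smul_apply,
      measure_univ, smul_eq_mul, mul_one]
    rw [← ENNReal.ofReal_sum_of_nonneg fun _ _ => isingWeight_div_isingZ_nonneg β Q _,
      ← Finset.sum_div, ← isingZ, div_self (isingZ_pos β Q).ne', ENNReal.ofReal_one]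

lemma integral_isingMeasure {E : Type*} [NormedAddCommGroup E] [NormedSpace ℝ E] [CompleteSpace E]
    (g : (ι → ℝ) → E) :
    ∫ x, g x ∂isingMeasure ι β Q =
      ∑ s : ι → Bool, (isingWeight β Q (pmVec s) / isingZ ι β Q) • g (pmVec s) := by
  rw [isingMeasure, integral_finsetSum_measure fun s _ =>
    (integrable_dirac enorm_lt_top).smul_measure ENNReal.ofReal_ne_top]
  refine Finset.sum_congr rfl fun s _ => ?_
  rw [integral_smul_measure, integral_dirac,
    ENNReal.toReal_ofReal (isingWeight_div_isingZ_nonneg β Q _)]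

end IsingMeasure

section NormalizedSum

variable {ι : Type*}

lemma pmVec_sq (s : ι → Bool) (i : ι) : pmVec s i ^ 2 = 1 := by
  unfold pmVec; split_ifs <;> norm_num

variable [Fintype ι]

/-- The normalised sum `S / √n` of the spins of a configuration; it is `0` when there are none. -/
def normalizedSum (s : ι → Bool) : ℝ := (∑ i, pmVec s i) / √(Fintype.card ι)

lemma sqrt_card_mul_sampleMean_pmVec (s : ι → Bool) :
    √(Fintype.card ι) * sampleMean (pmVec s) = normalizedSum s := by
  rw [sampleMean, normalizedSum, mul_div_left_comm, Real.sqrt_div_self, div_eq_mul_inv]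

lemma sum_cexp_mul_sum_pmVec [DecidableEq ι] (z : ℂ) :
    ∑ s : ι → Bool, Complex.exp (z * ∑ i, (pmVec s i : ℂ)) =
      (2 * Complex.cosh z) ^ Fintype.card ι := by
  calc ∑ s : ι → Bool, Complex.exp (z * ∑ i, (pmVec s i : ℂ))
      = ∑ s : ι → Bool, ∏ i, Complex.exp (z * ((if s i then 1 else -1 : ℝ) : ℂ)) := by
        simp only [pmVec, Finset.mul_sum, Complex.exp_sum]
    _ = ∏ _i : ι, ∑ b : Bool, Complex.exp (z * ((if b then 1 else -1 : ℝ) : ℂ)) :=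
        (Fintype.prod_sum fun (_ : ι) (b : Bool) =>
          Complex.exp (z * ((if b then 1 else -1 : ℝ) : ℂ))).symm
    _ = (2 * Complex.cosh z) ^ Fintype.card ι := by
        simp [Complex.two_cosh]

lemma sum_cexp_mul_normalizedSum [DecidableEq ι] (z : ℂ) :
    ∑ s : ι → Bool, Complex.exp (z * normalizedSum s) =
      (2 * Complex.cosh (z / √(Fintype.card ι))) ^ Fintype.card ι := by
  rw [← sum_cexp_mul_sum_pmVec]
  refine Finset.sum_congr rfl fun s _ => congrArg Complex.exp ?_
  rw [normalizedSum]
  push_cast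
  ring

end NormalizedSum

section CurieWeiss

variable {n : ℕ}

lemma mulVec_QCW (z : Fin n → ℝ) (i : Fin n) :
    (QCW n).mulVec z i = (∑ j, z j - z i) / n := by
  have entry_mul (j : Fin n) :
      QCW n i j * z j = (n : ℝ)⁻¹ * z j - if i = j then (n : ℝ)⁻¹ * z j else 0 := by
    unfold QCW; split_ifs <;> ring
  simp only [Matrix.mulVec, dotProduct, entry_mul, Finset.sum_sub_distrib, ← Finset.mul_sum,
    Finset.sum_ite_eq, Finset.mem_univ, if_true]
  ring

lemma dotProduct_mulVec_QCW (z : Fin n → ℝ) :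
    z ⬝ᵥ (QCW n).mulVec z = ((∑ i, z i) ^ 2 - ∑ i, z i ^ 2) / n := by
  simp only [dotProduct, mulVec_QCW, mul_div_assoc', mul_sub, ← Finset.sum_div,
    Finset.sum_sub_distrib, ← Finset.sum_mul, sq]

lemma isingWeight_QCW (hn : n ≠ 0) (β : ℝ) (s : Fin n → Bool) :
    isingWeight β (QCW n) (pmVec s) =
      Real.exp (-(β / 2)) * Real.exp (β / 2 * normalizedSum s ^ 2) := by
  have quadratic_form : pmVec s ⬝ᵥ (QCW n).mulVec (pmVec s) = normalizedSum s ^ 2 - 1 := by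
    simp only [dotProduct_mulVec_QCW, pmVec_sq, normalizedSum, div_pow, Finset.sum_const,
      Finset.card_univ, Fintype.card_fin, nsmul_eq_mul, mul_one, Real.sq_sqrt n.cast_nonneg,
      sub_div, div_self (Nat.cast_ne_zero.mpr hn : (n : ℝ) ≠ 0)]
  rw [isingWeight, quadratic_form, ← Real.exp_add]
  ring_nf

/-- The Curie–Weiss partition function `∑ exp (κ W² / 2 + u W)`, `W = S / √n`, in a complex external
field `u`. Unlike in `zᵀ Q^{CW} z`, the diagonal terms of `W²` are kept; they contribute a constant
factor. -/
def curieWeissPartition (n : ℕ) (κ u : ℂ) : ℂ :=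
  ∑ s : Fin n → Bool, Complex.exp (κ / 2 * (normalizedSum s : ℂ) ^ 2 + u * normalizedSum s)

lemma isingZ_QCW (hn : n ≠ 0) (β : ℝ) :
    (isingZ (Fin n) β (QCW n) : ℂ) = Complex.exp (-(β / 2)) * curieWeissPartition n β 0 := by
  simp only [isingZ, isingWeight_QCW hn, curieWeissPartition, Finset.mul_sum]
  push_cast
  simp only [zero_mul, add_zero]

lemma measurable_sqrt_mul_sampleMean (n : ℕ) :
    Measurable fun x : Fin n → ℝ => √n * sampleMean x := by
  unfold sampleMean; fun_prop

/-- The law of `√n X̄ₙ` for a Curie–Weiss vector `X` of length `n`. -/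
def curieWeissMeanLaw (β : ℝ) (n : ℕ) : Measure ℝ :=
  Measure.map (fun x : Fin n → ℝ => √n * sampleMean x) (isingMeasure (Fin n) β (QCW n))

instance isProbabilityMeasure_curieWeissMeanLaw (β : ℝ) (n : ℕ) :
    IsProbabilityMeasure (curieWeissMeanLaw β n) :=
  Measure.isProbabilityMeasure_map (measurable_sqrt_mul_sampleMean n).aemeasurable

lemma charFun_curieWeissMeanLaw (hn : n ≠ 0) (β t : ℝ) :
    charFun (curieWeissMeanLaw β n) t =
      curieWeissPartition n β (t * Complex.I) / curieWeissPartition n β 0 := by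
  have sqrt_mul_mean (s : Fin n → Bool) : √n * sampleMean (pmVec s) = normalizedSum s := by
    simpa only [Fintype.card_fin] using sqrt_card_mul_sampleMean_pmVec s
  rw [charFun_apply_real, curieWeissMeanLaw,
    integral_map (measurable_sqrt_mul_sampleMean n).aemeasurable (by fun_prop),
    integral_isingMeasure, curieWeissPartition, Finset.sum_div]
  refine Finset.sum_congr rfl fun s _ => ?_
  rw [sqrt_mul_mean, isingWeight_QCW hn, Complex.real_smul, Complex.ofReal_div, isingZ_QCW hn,
    Complex.ofReal_mul, Complex.exp_add]
  push_cast
  rw [mul_div_mul_left _ _ (Complex.exp_ne_zero _)]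
  ring_nf

end CurieWeiss

section GaussianIntegral

lemma ofReal_mul_cpow {r : ℝ} (hr : 0 < r) {z : ℂ} (hz : z ≠ 0) (s : ℂ) :
    ((r : ℂ) * z) ^ s = (r : ℂ) ^ s * z ^ s := by
  have ofReal_ne_zero : (r : ℂ) ≠ 0 := Complex.ofReal_ne_zero.mpr hr.ne'
  rw [Complex.cpow_def_of_ne_zero (mul_ne_zero ofReal_ne_zero hz),
    Complex.cpow_def_of_ne_zero ofReal_ne_zero, Complex.cpow_def_of_ne_zero hz,
    Complex.log_ofReal_mul hr hz, Complex.ofReal_log hr.le, add_mul, Complex.exp_add]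

variable {a : ℂ}

lemma gaussianPDFReal_smul_cexp_quadratic (a b : ℂ) (x : ℝ) :
    gaussianPDFReal 0 1 x • Complex.exp (a / 2 * (x : ℂ) ^ 2 + b * x) =
      ((√(2 * Real.pi))⁻¹ : ℝ) * Complex.exp (-((1 - a) / 2) * (x : ℂ) ^ 2 + b * x + 0) := by
  rw [gaussianPDFReal_def, Complex.real_smul]
  push_cast
  rw [mul_assoc, ← Complex.exp_add]
  congr 2
  · norm_num
  · norm_num
    ring

lemma one_sub_ne_zero_of_re_lt_one (ha : a.re < 1) : 1 - a ≠ 0 :=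
  sub_ne_zero.mpr <| by rintro rfl; simp at ha

lemma neg_one_sub_div_two_re_neg (ha : a.re < 1) : (-((1 - a) / 2)).re < 0 := by
  simp; linarith

lemma integrable_cexp_quadratic_gaussianReal (ha : a.re < 1) (b : ℂ) :
    Integrable (fun x : ℝ => Complex.exp (a / 2 * (x : ℂ) ^ 2 + b * x)) (gaussianReal 0 1) := by
  rw [gaussianReal_of_var_ne_zero 0 one_ne_zero, gaussianPDF_def,
    integrable_withDensity_iff_integrable_smul₀' (by fun_prop) (by simp)]
  simp only [ENNReal.toReal_ofReal (gaussianPDFReal_nonneg 0 1 _),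
    gaussianPDFReal_smul_cexp_quadratic]
  exact (integrable_cexp_quadratic' (neg_one_sub_div_two_re_neg ha) b 0).const_mul _

lemma integral_cexp_quadratic_gaussianReal (ha : a.re < 1) (b : ℂ) :
    ∫ x : ℝ, Complex.exp (a / 2 * (x : ℂ) ^ 2 + b * x) ∂gaussianReal 0 1 =
      (1 - a)⁻¹ ^ (1 / 2 : ℂ) * Complex.exp (b ^ 2 / (2 * (1 - a))) := by
  have one_sub_ne_zero := one_sub_ne_zero_of_re_lt_one ha
  have normalization :
      ((√(2 * Real.pi))⁻¹ : ℝ) * (Real.pi / ((1 - a) / 2)) ^ (1 / 2 : ℂ) =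
        (1 - a)⁻¹ ^ (1 / 2 : ℂ) := by
    have two_pi_pos : 0 < 2 * Real.pi := by positivity
    have sqrt_eq_cpow : ((√(2 * Real.pi) : ℝ) : ℂ) = ((2 * Real.pi : ℝ) : ℂ) ^ (1 / 2 : ℂ) := by
      rw [Real.sqrt_eq_rpow, Complex.ofReal_cpow two_pi_pos.le]
      norm_num
    rw [show Real.pi / ((1 - a) / 2) = ((2 * Real.pi : ℝ) : ℂ) * (1 - a)⁻¹ by
        push_cast; field_simp,
      ofReal_mul_cpow two_pi_pos (inv_ne_zero one_sub_ne_zero), Complex.ofReal_inv, ← sqrt_eq_cpow,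
      inv_mul_cancel_left₀ (Complex.ofReal_ne_zero.mpr (Real.sqrt_pos.mpr two_pi_pos).ne')]
  rw [integral_gaussianReal_eq_integral_smul one_ne_zero]
  simp only [gaussianPDFReal_smul_cexp_quadratic]
  rw [integral_const_mul, integral_cexp_quadratic (neg_one_sub_div_two_re_neg ha), ← mul_assoc,
    neg_neg, normalization]
  congr 2
  field_simp
  ring

lemma cexp_sq_div_two (c u : ℂ) (x : ℝ) :
    Complex.exp ((c * x + u) ^ 2 / 2) =
      Complex.exp (u ^ 2 / 2) * Complex.exp (c ^ 2 / 2 * (x : ℂ) ^ 2 + c * u * x) := by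
  rw [← Complex.exp_add]
  ring_nf

variable {c : ℂ}

lemma integrable_cexp_sq_gaussianReal (hc : (c ^ 2).re < 1) (u : ℂ) :
    Integrable (fun x : ℝ => Complex.exp ((c * x + u) ^ 2 / 2)) (gaussianReal 0 1) := by
  simp only [cexp_sq_div_two]
  exact (integrable_cexp_quadratic_gaussianReal hc _).const_mul _

lemma integral_cexp_sq_gaussianReal (hc : (c ^ 2).re < 1) (u : ℂ) :
    ∫ x : ℝ, Complex.exp ((c * x + u) ^ 2 / 2) ∂gaussianReal 0 1 =
      (1 - c ^ 2)⁻¹ ^ (1 / 2 : ℂ) * Complex.exp (u ^ 2 / (2 * (1 - c ^ 2))) := by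
  have one_sub_ne_zero := one_sub_ne_zero_of_re_lt_one hc
  simp only [cexp_sq_div_two]
  rw [integral_const_mul, integral_cexp_quadratic_gaussianReal hc, mul_left_comm,
    ← Complex.exp_add]
  congr 2
  field_simp
  ring

end GaussianIntegral

section HubbardStratonovich

lemma curieWeissPartition_sq (n : ℕ) (c u : ℂ) :
    curieWeissPartition n (c ^ 2) u =
      2 ^ n * ∫ x : ℝ, Complex.cosh ((c * x + u) / √n) ^ n ∂gaussianReal 0 1 := by
  have integrand_eq (s : Fin n → Bool) (x : ℝ) :
      Complex.exp ((c * x + u) * normalizedSum s) =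
        Complex.exp (u * normalizedSum s) *
          Complex.exp (0 / 2 * (x : ℂ) ^ 2 + c * normalizedSum s * x) := by
    rw [← Complex.exp_add]
    ring_nf
  have integrable_term (s : Fin n → Bool) :
      Integrable (fun x : ℝ => Complex.exp ((c * x + u) * normalizedSum s)) (gaussianReal 0 1) := by
    simp only [integrand_eq]
    exact (integrable_cexp_quadratic_gaussianReal (by simp) _).const_mul _
  have integral_term (s : Fin n → Bool) :
      ∫ x : ℝ, Complex.exp ((c * x + u) * normalizedSum s) ∂gaussianReal 0 1 =
        Complex.exp (c ^ 2 / 2 * (normalizedSum s : ℂ) ^ 2 + u * normalizedSum s) := by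
    simp only [integrand_eq]
    rw [integral_const_mul, integral_cexp_quadratic_gaussianReal (by simp), sub_zero, inv_one,
      Complex.one_cpow, one_mul, ← Complex.exp_add]
    ring_nf
  calc curieWeissPartition n (c ^ 2) u
      = ∑ s : Fin n → Bool,
          ∫ x : ℝ, Complex.exp ((c * x + u) * normalizedSum s) ∂gaussianReal 0 1 := by
        simp only [integral_term, curieWeissPartition]
    _ = ∫ x : ℝ, ∑ s : Fin n → Bool,
          Complex.exp ((c * x + u) * normalizedSum s) ∂gaussianReal 0 1 :=
        (integral_finsetSum _ fun s _ => integrable_term s).symm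
    _ = 2 ^ n * ∫ x : ℝ, Complex.cosh ((c * x + u) / √n) ^ n ∂gaussianReal 0 1 := by
        simp only [sum_cexp_mul_normalizedSum, Fintype.card_fin, mul_pow, integral_const_mul]

end HubbardStratonovich

section Asymptotics

lemma norm_cosh_le_cosh_re (z : ℂ) : ‖Complex.cosh z‖ ≤ Real.cosh z.re := by
  have norm_le := norm_add_le (Complex.exp z) (Complex.exp (-z))
  rw [Complex.norm_exp, Complex.norm_exp, Complex.neg_re] at norm_le
  rw [Complex.cosh, Real.cosh_eq, norm_div, Complex.norm_ofNat]
  gcongr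

lemma norm_cosh_div_sqrt_pow_le (n : ℕ) (z : ℂ) :
    ‖Complex.cosh (z / √n) ^ n‖ ≤ Real.exp (z.re ^ 2 / 2) := by
  rcases eq_or_ne n 0 with rfl | hn
  · simpa using (by positivity : 0 ≤ z.re ^ 2 / 2)
  calc ‖Complex.cosh (z / √n) ^ n‖
      ≤ Real.exp ((z.re / √n) ^ 2 / 2) ^ n := by
        rw [norm_pow, ← Complex.div_ofReal_re]
        gcongr
        exact (norm_cosh_le_cosh_re _).trans (Real.cosh_le_exp_half_sq _)
    _ = Real.exp (z.re ^ 2 / 2) := by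
        rw [← Real.exp_nat_mul, div_pow, Real.sq_sqrt n.cast_nonneg]
        field_simp

lemma tendsto_inv_sqrt_natCast :
    Tendsto (fun n : ℕ => (((√n)⁻¹ : ℝ) : ℂ)) atTop (𝓝[≠] 0) := by
  have tendsto_inv : Tendsto (fun n : ℕ => (√n)⁻¹) atTop (𝓝[≠] 0) :=
    (tendsto_inv_atTop_nhdsGT_zero.comp
      (Real.tendsto_sqrt_atTop.comp tendsto_natCast_atTop_atTop)).mono_right
      (nhdsGT_le_nhdsNE 0)
  have tendsto_ofReal : Tendsto Complex.ofReal (𝓝[≠] 0) (𝓝[≠] 0) :=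
    Complex.continuous_ofReal.continuousWithinAt.tendsto_nhdsWithin fun _ => by simp
  exact tendsto_ofReal.comp tendsto_inv

lemma tendsto_cosh_div_sqrt_pow (z : ℂ) :
    Tendsto (fun n : ℕ => Complex.cosh (z / √n) ^ n) atTop (𝓝 (Complex.exp (z ^ 2 / 2))) := by
  have cosh_eq (w : ℂ) : Complex.cosh w = 1 + 2 * Complex.sinh (w / 2) ^ 2 := by
    have := Complex.cosh_two_mul (w / 2)
    rw [mul_div_cancel₀ w two_ne_zero, Complex.cosh_sq] at this
    rw [this]
    ring
  have sinh_slope : Tendsto (fun r : ℂ => r⁻¹ * Complex.sinh (z / 2 * r)) (𝓝[≠] 0) (𝓝 (z / 2)) := by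
    have deriv_sinh : HasDerivAt (fun r : ℂ => Complex.sinh (z / 2 * r)) (z / 2) 0 := by
      simpa using ((hasDerivAt_id (0 : ℂ)).const_mul (z / 2)).csinh
    simpa using deriv_sinh.tendsto_slope_zero
  simp only [cosh_eq]
  refine Complex.tendsto_one_add_pow_exp_of_tendsto ?_
  convert! ((sinh_slope.comp tendsto_inv_sqrt_natCast).pow 2).const_mul 2 using 2 with n
  · have sqrt_sq : ((√n : ℝ) : ℂ) ^ 2 = n := by
      rw [← Complex.ofReal_pow, Real.sq_sqrt n.cast_nonneg, Complex.ofReal_natCast]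
    simp only [Function.comp_apply, Complex.ofReal_inv, inv_inv, mul_pow, sqrt_sq]
    ring_nf
  · ring

lemma tendsto_integral_cosh_div_sqrt_pow {c : ℂ} (hc : c.re ^ 2 < 1) (u : ℂ) :
    Tendsto (fun n : ℕ => ∫ x : ℝ, Complex.cosh ((c * x + u) / √n) ^ n ∂gaussianReal 0 1) atTop
      (𝓝 (∫ x : ℝ, Complex.exp ((c * x + u) ^ 2 / 2) ∂gaussianReal 0 1)) := by
  have integrable_bound :
      Integrable (fun x : ℝ => Real.exp ((c * x + u).re ^ 2 / 2)) (gaussianReal 0 1) := by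
    refine (integrable_cexp_sq_gaussianReal (c := c.re) (by simpa [sq] using hc) u.re).norm.congr
      (.of_forall fun x => ?_)
    simp [Complex.norm_exp, sq]
  have continuous_integrand (n : ℕ) :
      Continuous fun x : ℝ => Complex.cosh ((c * x + u) / √n) ^ n :=
    (Complex.continuous_cosh.comp (by fun_prop)).pow n
  exact tendsto_integral_of_dominated_convergence _
    (fun n => (continuous_integrand n).aestronglyMeasurable)
    integrable_bound
    (fun n => .of_forall fun x => norm_cosh_div_sqrt_pow_le n _)
    (.of_forall fun x => tendsto_cosh_div_sqrt_pow _)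

lemma tendsto_curieWeissPartition_div {c : ℂ} (hc : c.re ^ 2 < 1) (u : ℂ) :
    Tendsto (fun n => curieWeissPartition n (c ^ 2) u / curieWeissPartition n (c ^ 2) 0) atTop
      (𝓝 (Complex.exp (u ^ 2 / (2 * (1 - c ^ 2))))) := by
  have sq_re_lt_one : (c ^ 2).re < 1 := by
    simp only [sq, Complex.mul_re] at hc ⊢
    nlinarith [mul_self_nonneg c.im]
  have constant_ne_zero : (1 - c ^ 2)⁻¹ ^ (1 / 2 : ℂ) ≠ 0 := by
    simp [Complex.cpow_eq_zero_iff, one_sub_ne_zero_of_re_lt_one sq_re_lt_one]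
  have tendsto_ratio := (tendsto_integral_cosh_div_sqrt_pow hc u).div
    (tendsto_integral_cosh_div_sqrt_pow hc 0)
    (by
      rw [integral_cexp_sq_gaussianReal sq_re_lt_one]
      exact mul_ne_zero constant_ne_zero (Complex.exp_ne_zero _))
  rw [integral_cexp_sq_gaussianReal sq_re_lt_one, integral_cexp_sq_gaussianReal sq_re_lt_one,
    mul_div_mul_left _ _ constant_ne_zero, zero_pow two_ne_zero, zero_div, Complex.exp_zero,
    div_one] at tendsto_ratio
  refine tendsto_ratio.congr fun n => ?_
  rw [curieWeissPartition_sq, curieWeissPartition_sq,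
    mul_div_mul_left _ _ (pow_ne_zero n two_ne_zero), Pi.div_apply]

lemma exists_sq_eq_ofReal_and_re_sq_lt_one {β : ℝ} (hβ : β < 1) :
    ∃ c : ℂ, c ^ 2 = β ∧ c.re ^ 2 < 1 := by
  obtain ⟨c, hc⟩ := IsAlgClosed.exists_pow_nat_eq (β : ℂ) zero_lt_two
  have re_sq : c.re ^ 2 - c.im ^ 2 = β := by simpa [sq] using congrArg Complex.re hc
  have re_mul_im : c.re * c.im = 0 := by
    have im_sq : c.re * c.im + c.im * c.re = 0 := by simpa [sq] using congrArg Complex.im hc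
    linarith
  refine ⟨c, hc, ?_⟩
  rcases mul_eq_zero.mp re_mul_im with re_zero | im_zero
  · simp [re_zero]
  · rw [im_zero] at re_sq
    linarith

lemma tendsto_charFun_curieWeissMeanLaw {β : ℝ} (hβ : β < 1) (t : ℝ) :
    Tendsto (fun n => charFun (curieWeissMeanLaw β n) t) atTop
      (𝓝 (charFun (gaussianReal 0 (Real.toNNReal (1 / (1 - β)))) t)) := by
  obtain ⟨c, c_sq, c_re⟩ := exists_sq_eq_ofReal_and_re_sq_lt_one hβ
  have one_sub_ne_zero : (1 - β : ℂ) ≠ 0 := by exact_mod_cast (sub_pos.mpr hβ).ne'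
  have charFun_gaussian : charFun (gaussianReal 0 (Real.toNNReal (1 / (1 - β)))) t =
      Complex.exp ((t * Complex.I) ^ 2 / (2 * (1 - β))) := by
    rw [charFun_gaussianReal, Real.coe_toNNReal _ (one_div_pos.mpr (sub_pos.mpr hβ)).le, mul_pow,
      Complex.I_sq]
    push_cast
    congr 1
    field_simp
    ring
  rw [charFun_gaussian, ← c_sq]
  refine (tendsto_curieWeissPartition_div c_re (t * Complex.I)).congr' ?_
  filter_upwards [eventually_ne_atTop 0] with n hn
  rw [charFun_curieWeissMeanLaw hn, c_sq]

end Asymptotics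

theorem curieWeiss_clt_subcritical_general (β : ℝ) (hβ : β < 1) :
    TendstoInDistribution
      (fun n => Measure.map (fun x : Fin n → ℝ => Real.sqrt n * sampleMean x)
        (isingMeasure (Fin n) β (QCW n)))
      (gaussianReal 0 (Real.toNNReal (1 / (1 - β)))) :=
  tendstoInDistribution_of_tendsto_charFun (μ := curieWeissMeanLaw β)
    (tendsto_charFun_curieWeissMeanLaw hβ)

/-- **(Curie–Weiss CLT, subcritical `β < 1`).** If `X ~ P_{β,Q^{CW}}` with `β ∈ (0,1)`, then
`√n X̄ₙ →d N(0, 1/(1-β))`. -/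
theorem curieWeiss_clt_subcritical (β : ℝ) (hβ₀ : 0 < β) (hβ₁ : β < 1) :
    TendstoInDistribution
      (fun n => Measure.map (fun x : Fin n → ℝ => Real.sqrt n * sampleMean x)
        (isingMeasure (Fin n) β (QCW n)))
      (gaussianReal 0 (Real.toNNReal (1 / (1 - β)))) := by
  exact curieWeiss_clt_subcritical_general β hβ₁

end
end

section
/- Let β > 1 and for each n let X ~ P_{β,Q^{CW}} be a Curie–Weiss Ising vector on {−1,1}^n. Let m = m(β) be the unique positive root of m = tanh(βm). Then the conditional law of √n(X̄_n − m) given the event {X̄_n > 0} converges in distribution to N(0, (1−m²)/(1 − β(1−m²))). -/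
/-!
Up to a constant, the Curie–Weiss weight of `x ∈ {-1, 1}ⁿ` is
`exp (β m ∑ xᵢ) * exp (β W² / 2)` with `W = √n (x̄ - m)`. Hence the Curie–Weiss law is the law of
independent spins in the external field `β m`, tilted by `exp (β W² / 2)`. These spins have mean
`tanh (β m) = m` and variance `v = 1 - m²`, so `W` converges in distribution to `N(0, v)` under the
product law, and tilting `N(0, v)` by `exp (β w² / 2)` gives `N(0, v / (1 - β v))`.

To pass to the limit under the tilt, one bounds `exp (b W² / 2)` on `{x̄ > 0}` uniformly in `n` in
expectation, for some `b > β`. Writing `exp (b W² / 2)` as a Gaussian mixture of the exponentials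
`exp (t W)` reduces this to `𝔼 exp (t W) ≤ exp (κ t² / 2)` with `κ < 1 / β`, which holds because the
mean-field free energy grows quadratically around `β m`. That growth fails near the second minimum
`-β m`; conditioning on `x̄ > 0` is what confines `t` to a half-line away from it.
-/

open MeasureTheory ProbabilityTheory Filter Topology Matrix

noncomputable section

section Tilted

open Real
open scoped ENNReal

lemma hasLaw_cond {Ω E : Type*} {mΩ : MeasurableSpace Ω} {mE : MeasurableSpace E} {X : Ω → E}
    {μ : Measure E} {P : Measure Ω} (hX : HasLaw X μ P) {s : Set E} (hs : MeasurableSet s) :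
    HasLaw X μ[|s] P[|X ⁻¹' s] where
  aemeasurable := hX.aemeasurable.mono_ac cond_absolutelyContinuous
  map_eq := by
    rw [ProbabilityTheory.cond, ProbabilityTheory.cond, Measure.map_smul,
      ← Measure.restrict_map_of_aemeasurable hX.aemeasurable hs,
      ← Measure.map_apply_of_aemeasurable hX.aemeasurable hs, hX.map_eq]

lemma integral_cond_tilted {Ω : Type*} {mΩ : MeasurableSpace Ω} {μ : Measure Ω} [NeZero μ]
    {φ : Ω → ℝ} (hφ : Integrable (fun ω ↦ exp (φ ω)) μ) {A : Set Ω} (hA : MeasurableSet A)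
    (f : Ω → ℝ) :
    ∫ ω, f ω ∂(μ.tilted φ)[|A] =
      (∫ ω in A, exp (φ ω) * f ω ∂μ) / ∫ ω in A, exp (φ ω) ∂μ := by
  have hZ : ∫ ω, exp (φ ω) ∂μ ≠ 0 := (integral_exp_pos hφ).ne'
  have := isProbabilityMeasure_tilted hφ
  have htilt (g : Ω → ℝ) : ∫ ω in A, g ω ∂μ.tilted φ =
      (∫ ω in A, exp (φ ω) * g ω ∂μ) / ∫ ω, exp (φ ω) ∂μ := by
    simp_rw [setIntegral_tilted' φ g hA, smul_eq_mul, div_mul_eq_mul_div, integral_div]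
  have hmass : (μ.tilted φ).real A = (∫ ω in A, exp (φ ω) ∂μ) / ∫ ω, exp (φ ω) ∂μ := by
    simpa using htilt 1
  rw [ProbabilityTheory.cond, integral_smul_measure, ENNReal.toReal_inv, ← measureReal_def, hmass,
    htilt, smul_eq_mul, inv_mul_eq_div, div_div_div_cancel_right₀ hZ]

lemma pi_tilted {ι : Type*} [Fintype ι] {E : ι → Type*} {mE : ∀ i, MeasurableSpace (E i)}
    (μ : (i : ι) → Measure (E i)) [∀ i, SigmaFinite (μ i)] (φ : (i : ι) → E i → ℝ) :
    Measure.pi (fun i ↦ (μ i).tilted (φ i)) =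
      (Measure.pi μ).tilted fun x ↦ ∑ i, φ i (x i) := by
  refine Measure.pi_eq fun s hs ↦ ?_
  simp_rw [tilted_apply_eq_ofReal_integral' _ (hs _),
    tilted_apply_eq_ofReal_integral' _ (MeasurableSet.univ_pi hs), exp_sum,
    Measure.restrict_pi_pi, integral_fintype_prod_eq_prod (𝕜 := ℝ) (fun i x ↦ exp (φ i x)),
    ← Finset.prod_div_distrib]
  rw [integral_fintype_prod_eq_prod (𝕜 := ℝ) (fun i x ↦ exp (φ i x) / ∫ y, exp (φ i y) ∂μ i),
    ENNReal.ofReal_prod_of_nonneg fun i _ ↦ by positivity]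

lemma tilted_add_const {Ω : Type*} {mΩ : MeasurableSpace Ω} (μ : Measure Ω) (φ : Ω → ℝ) (c : ℝ) :
    μ.tilted (fun ω ↦ φ ω + c) = μ.tilted φ := by
  simp_rw [Measure.tilted, exp_add, integral_mul_const, mul_div_mul_right _ _ (exp_pos c).ne']

lemma map_tilted_comp {Ω Ω' : Type*} {mΩ : MeasurableSpace Ω} {mΩ' : MeasurableSpace Ω'}
    {μ : Measure Ω} {g : Ω → Ω'} (hg : Measurable g) {φ : Ω' → ℝ} (hφ : Measurable φ) :
    (μ.tilted (φ ∘ g)).map g = (μ.map g).tilted φ := by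
  ext s hs
  rw [Measure.map_apply hg hs, tilted_apply' _ _ (hg hs), tilted_apply' _ _ hs,
    setLIntegral_map hs (by fun_prop) hg, integral_map hg.aemeasurable (by fun_prop)]
  rfl

lemma sum_dirac_tilted {S Ω : Type*} [Fintype S] {mΩ : MeasurableSpace Ω}
    [MeasurableSingletonClass Ω] (x : S → Ω) (φ : Ω → ℝ) :
    (∑ s, Measure.dirac (x s)).tilted φ =
      ∑ s, ENNReal.ofReal (exp (φ (x s)) / ∑ t, exp (φ (x t))) • Measure.dirac (x s) := by
  have hZ : ∫ ω, exp (φ ω) ∂(∑ s, Measure.dirac (x s)) = ∑ t, exp (φ (x t)) := by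
    simp_rw [integral_finsetSum_measure fun _ _ ↦ integrable_dirac enorm_lt_top, integral_dirac]
  simp_rw [Measure.tilted, hZ, ← Measure.sum_fintype, withDensity_sum, dirac_withDensity]

section Gaussian

lemma gaussianReal_zero_eq_tilted {v : ℝ} (hv : 0 < v) :
    gaussianReal 0 v.toNNReal = volume.tilted fun x ↦ -(2 * v)⁻¹ * x ^ 2 := by
  rw [gaussianReal_of_var_ne_zero 0 (toNNReal_pos.2 hv).ne', Measure.tilted, integral_gaussian]
  congr with x
  rw [gaussianPDF, gaussianPDFReal, coe_toNNReal v hv.le, div_inv_eq_mul, div_eq_inv_mul]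
  ring_nf

variable {c v : ℝ}

lemma integrable_exp_mul_sq_gaussianReal (hv : 0 < v) (hcv : c * v < 1) :
    Integrable (fun x ↦ exp (c * x ^ 2 / 2)) (gaussianReal 0 v.toNNReal) := by
  rw [gaussianReal_zero_eq_tilted hv,
    integrable_tilted_iff (integrable_exp_neg_mul_sq (by positivity))]
  have hpos : 0 < (1 - c * v) / (2 * v) := div_pos (by linarith) (by positivity)
  refine (integrable_exp_neg_mul_sq hpos).congr (.of_forall fun x ↦ ?_)
  dsimp only
  rw [smul_eq_mul, ← exp_add]
  congr 1
  field

lemma gaussianReal_tilted_sq (hv : 0 < v) (hcv : c * v < 1) :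
    (gaussianReal 0 v.toNNReal).tilted (fun x ↦ c * x ^ 2 / 2) =
      gaussianReal 0 (v / (1 - c * v)).toNNReal := by
  have : 0 < 1 - c * v := by linarith
  rw [gaussianReal_zero_eq_tilted hv, gaussianReal_zero_eq_tilted (by positivity),
    tilted_tilted (integrable_exp_neg_mul_sq (by positivity))]
  congr with x
  simp only [Pi.add_apply]
  field

end Gaussian

end Tilted

section ConvergenceOfMoments

open Real
open scoped ENNReal NNReal

/-- The continuous truncation of `x` to `[-K, K]`, for `0 ≤ K`; it approximates the identity by
bounded continuous functions. -/
def clamp (K x : ℝ) : ℝ := max (-K) (min K x)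

lemma continuous_clamp (K : ℝ) : Continuous (clamp K) := by
  unfold clamp
  fun_prop

lemma abs_clamp_le {K : ℝ} (hK : 0 ≤ K) (x : ℝ) : |clamp K x| ≤ K :=
  abs_le.2 ⟨le_max_left _ _, max_le (by linarith) (min_le_left _ _)⟩

lemma clamp_eq_self {K x : ℝ} (hx : |x| ≤ K) : clamp K x = x := by
  rw [clamp, min_eq_right (abs_le.1 hx).2, max_eq_right (abs_le.1 hx).1]

lemma abs_sub_clamp_le_abs {K : ℝ} (hK : 0 ≤ K) (x : ℝ) : |x - clamp K x| ≤ |x| := by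
  unfold clamp
  grind

lemma abs_clamp_le_abs {K : ℝ} (hK : 0 ≤ K) (x : ℝ) : |clamp K x| ≤ |x| := by
  unfold clamp
  grind

lemma tendsto_clamp (x : ℝ) : Tendsto (fun K ↦ clamp K x) atTop (𝓝 x) :=
  tendsto_const_nhds.congr' <| (eventually_ge_atTop |x|).mono fun _ hK ↦ (clamp_eq_self hK).symm

lemma abs_sub_clamp_le_rpow {K p : ℝ} (hK : 0 < K) (hp : 1 ≤ p) (x : ℝ) :
    |x - clamp K x| ≤ K ^ (1 - p) * |x| ^ p := by
  obtain hx | hx := le_total |x| K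
  · rw [clamp_eq_self hx, sub_self, abs_zero]
    positivity
  calc |x - clamp K x| ≤ |x| := abs_sub_clamp_le_abs hK.le x
    _ = |x| ^ (1 - p) * |x| ^ p := by
        rw [← rpow_add (hK.trans_le hx), sub_add_cancel, rpow_one]
    _ ≤ K ^ (1 - p) * |x| ^ p := by
        gcongr ?_ * _
        exact rpow_le_rpow_of_nonpos hK hx (by linarith)

lemma enorm_sub_clamp_le_rpow {K p : ℝ} (hK : 0 < K) (hp : 1 ≤ p) (x : ℝ) :
    ‖x - clamp K x‖ₑ ≤ ENNReal.ofReal (K ^ (1 - p)) * ‖x‖ₑ ^ p := by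
  rw [← ofReal_norm, ← ofReal_norm, ENNReal.ofReal_rpow_of_nonneg (norm_nonneg x) (by linarith),
    ← ENNReal.ofReal_mul (by positivity)]
  exact ENNReal.ofReal_le_ofReal (abs_sub_clamp_le_rpow hK hp x)

section

variable {Ω : Type*} {mΩ : MeasurableSpace Ω} {μ : Measure Ω} {X : Ω → ℝ}

lemma integrable_clamp [IsFiniteMeasure μ] (hX : AEMeasurable X μ) {K : ℝ} (hK : 0 ≤ K) :
    Integrable (fun ω ↦ clamp K (X ω)) μ :=
  .of_bound ((continuous_clamp K).measurable.comp_aemeasurable hX).aestronglyMeasurable K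
    (.of_forall fun ω ↦ abs_clamp_le hK (X ω))

lemma lintegral_enorm_sub_clamp_le {K p : ℝ} (hK : 0 < K) (hp : 1 ≤ p) :
    ∫⁻ ω, ‖X ω - clamp K (X ω)‖ₑ ∂μ ≤ ENNReal.ofReal (K ^ (1 - p)) * ∫⁻ ω, ‖X ω‖ₑ ^ p ∂μ := by
  rw [← lintegral_const_mul' _ _ ENNReal.ofReal_ne_top]
  exact lintegral_mono fun ω ↦ enorm_sub_clamp_le_rpow hK hp (X ω)

lemma edist_integral_clamp_le [IsFiniteMeasure μ] (hX : AEMeasurable X μ) {K p : ℝ} (hK : 0 < K)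
    (hp : 1 ≤ p) (hmom : ∫⁻ ω, ‖X ω‖ₑ ^ p ∂μ ≠ ∞) :
    edist (∫ ω, X ω ∂μ) (∫ ω, clamp K (X ω) ∂μ) ≤
      ENNReal.ofReal (K ^ (1 - p)) * ∫⁻ ω, ‖X ω‖ₑ ^ p ∂μ := by
  have hbound := lintegral_enorm_sub_clamp_le (μ := μ) (X := X) hK hp
  have hclamp := integrable_clamp hX hK.le
  have hdiff : Integrable (fun ω ↦ X ω - clamp K (X ω)) μ :=
    ⟨hX.aestronglyMeasurable.sub hclamp.aestronglyMeasurable,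
      hbound.trans_lt (ENNReal.mul_lt_top ENNReal.ofReal_lt_top hmom.lt_top)⟩
  have hX_int : Integrable X μ :=
    (hdiff.add hclamp).congr (.of_forall fun _ ↦ sub_add_cancel _ _)
  rw [edist_eq_enorm_sub, ← integral_sub hX_int hclamp]
  exact (enorm_integral_le_lintegral_enorm _).trans hbound

lemma tendsto_integral_clamp (hX : Integrable X μ) :
    Tendsto (fun k : ℕ ↦ ∫ ω, clamp k (X ω) ∂μ) atTop (𝓝 (∫ ω, X ω ∂μ)) :=
  tendsto_integral_of_dominated_convergence (fun ω ↦ ‖X ω‖)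
    (fun k ↦ (continuous_clamp k).comp_aestronglyMeasurable hX.1) hX.norm
    (fun k ↦ .of_forall fun ω ↦ abs_clamp_le_abs k.cast_nonneg (X ω))
    (.of_forall fun ω ↦ (tendsto_clamp (X ω)).comp tendsto_natCast_atTop_atTop)

end

section

variable {ι Ω' E : Type*} {Ω : ι → Type*} {mΩ : ∀ i, MeasurableSpace (Ω i)}
  {mΩ' : MeasurableSpace Ω'} {μ : (i : ι) → Measure (Ω i)} [∀ i, IsProbabilityMeasure (μ i)]
  {μ' : Measure Ω'} [IsProbabilityMeasure μ'] {l : Filter ι}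

lemma tendsto_integral_comp_of_tendstoInDistribution [TopologicalSpace E] [MeasurableSpace E]
    [OpensMeasurableSpace E] {X : (i : ι) → Ω i → E} {Z : Ω' → E}
    (h : MeasureTheory.TendstoInDistribution X l Z μ μ') (f : BoundedContinuousFunction E ℝ) :
    Tendsto (fun i ↦ ∫ ω, f (X i ω) ∂μ i) l (𝓝 (∫ ω, f (Z ω) ∂μ')) := by
  have hmap := ProbabilityMeasure.tendsto_iff_forall_integral_tendsto.1 h.tendsto f
  have hmeas : Measurable f := f.continuous.measurable
  simpa only [ProbabilityMeasure.coe_mk,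
    integral_map h.aemeasurable_limit hmeas.aestronglyMeasurable,
    integral_map (h.forall_aemeasurable _) hmeas.aestronglyMeasurable] using hmap

theorem tendsto_integral_of_tendstoInDistribution_of_bounded_moment {X : (i : ι) → Ω i → ℝ}
    {Z : Ω' → ℝ} (h : MeasureTheory.TendstoInDistribution X l Z μ μ') (hZ : Integrable Z μ') {p : ℝ}
    (hp : 1 < p) {C : ℝ≥0} (hmom : ∀ i, ∫⁻ ω, ‖X i ω‖ₑ ^ p ∂μ i ≤ C) :
    Tendsto (fun i ↦ ∫ ω, X i ω ∂μ i) l (𝓝 (∫ ω, Z ω ∂μ')) := by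
  have hunif : TendstoUniformly (fun (k : ℕ) i ↦ ∫ ω, clamp k (X i ω) ∂μ i)
      (fun i ↦ ∫ ω, X i ω ∂μ i) atTop := by
    have hrate : Tendsto (fun k : ℕ ↦ ENNReal.ofReal ((k : ℝ) ^ (1 - p)) * C) atTop (𝓝 0) := by
      have hpow := (tendsto_rpow_neg_atTop (sub_pos.2 hp)).comp tendsto_natCast_atTop_atTop
      simpa [Function.comp_def] using
        ENNReal.Tendsto.mul_const (ENNReal.tendsto_ofReal hpow) (.inr ENNReal.coe_ne_top)
    refine EMetric.tendstoUniformly_iff.2 fun ε hε ↦ ?_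
    filter_upwards [hrate.eventually_lt_const hε, eventually_gt_atTop 0] with k hk hk0 i
    calc edist (∫ ω, X i ω ∂μ i) (∫ ω, clamp k (X i ω) ∂μ i)
        ≤ ENNReal.ofReal ((k : ℝ) ^ (1 - p)) * ∫⁻ ω, ‖X i ω‖ₑ ^ p ∂μ i :=
          edist_integral_clamp_le (h.forall_aemeasurable i) (Nat.cast_pos.2 hk0) hp.le
            ((hmom i).trans_lt ENNReal.coe_lt_top).ne
      _ ≤ ENNReal.ofReal ((k : ℝ) ^ (1 - p)) * C := by gcongr; exact hmom i
      _ < ε := hk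
  refine hunif.tendsto_of_eventually_tendsto (.of_forall fun k ↦ ?_) (tendsto_integral_clamp hZ)
  exact tendsto_integral_comp_of_tendstoInDistribution h <|
    BoundedContinuousFunction.ofNormedAddCommGroup (clamp k) (continuous_clamp k) k
      (abs_clamp_le k.cast_nonneg)

end

end ConvergenceOfMoments

section CondTilted

open Real
open scoped ENNReal NNReal

variable {ι Ω Ω' : Type*} {mΩ : MeasurableSpace Ω} {mΩ' : MeasurableSpace Ω'} {P : Measure Ω}
  [IsProbabilityMeasure P] {P' : Measure Ω'} [IsProbabilityMeasure P'] {l : Filter ι}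
  [l.IsCountablyGenerated] {A : ι → Set Ω}

lemma tendstoInDistribution_indicator {E : Type*} [SeminormedAddCommGroup E]
    [SecondCountableTopology E] [MeasurableSpace E] [BorelSpace E] {X : ι → Ω → E} {Z : Ω' → E}
    (h : MeasureTheory.TendstoInDistribution X l Z (fun _ ↦ P) P') (hA : ∀ i, MeasurableSet (A i))
    (hA_compl : Tendsto (fun i ↦ P (A i)ᶜ) l (𝓝 0)) :
    MeasureTheory.TendstoInDistribution (fun i ↦ (A i).indicator (X i)) l Z (fun _ ↦ P) P' := by
  refine tendstoInDistribution_of_tendstoInMeasure_sub _ Z h (fun ε hε ↦ ?_)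
    fun i ↦ (h.forall_aemeasurable i).indicator (hA i)
  refine tendsto_of_tendsto_of_tendsto_of_le_of_le tendsto_const_nhds hA_compl
    (fun _ ↦ zero_le) fun i ↦ measure_mono fun ω (hω : ε ≤ edist _ _) hωA ↦ hω.not_gt ?_
  simpa [Set.indicator_of_mem hωA] using hε

variable {E : Type*} [TopologicalSpace E] [MeasurableSpace E] [OpensMeasurableSpace E]
  {W : ι → Ω → E} {Z : Ω' → E} {g : E → ℝ}

lemma tendsto_setIntegral_exp_mul
    (h : MeasureTheory.TendstoInDistribution W l Z (fun _ ↦ P) P') (hg : Continuous g)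
    (hZ : Integrable (fun ω ↦ exp (g (Z ω))) P') (hA : ∀ i, MeasurableSet (A i))
    (hA_compl : Tendsto (fun i ↦ P (A i)ᶜ) l (𝓝 0)) {p : ℝ} (hp : 1 < p) {C : ℝ≥0}
    (hmom : ∀ i, ∫⁻ ω in A i, ENNReal.ofReal (exp (p * g (W i ω))) ∂P ≤ C)
    (f : BoundedContinuousFunction E ℝ) :
    Tendsto (fun i ↦ ∫ ω in A i, exp (g (W i ω)) * f (W i ω) ∂P) l
      (𝓝 (∫ ω, exp (g (Z ω)) * f (Z ω) ∂P')) := by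
  have hp0 : 0 < p := one_pos.trans hp
  have hlim := tendstoInDistribution_indicator
    (h.continuous_comp (g := fun x ↦ exp (g x) * f x) (by fun_prop)) hA hA_compl
  have hZf : Integrable (fun ω ↦ exp (g (Z ω)) * f (Z ω)) P' :=
    hZ.mul_bdd (c := ‖f‖)
      (f.continuous.measurable.comp_aemeasurable h.aemeasurable_limit).aestronglyMeasurable
      (.of_forall fun ω ↦ f.norm_coe_le_norm (Z ω))
  have hpow (x : E) : ‖exp (g x) * f x‖ₑ ^ p ≤ ENNReal.ofReal (exp (p * g x)) * ‖f‖ₑ ^ p := by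
    rw [enorm_mul, ENNReal.mul_rpow_of_nonneg _ _ hp0.le, enorm_eq_ofReal (exp_pos _).le,
      ENNReal.ofReal_rpow_of_pos (exp_pos _), ← exp_mul, mul_comm (g x)]
    gcongr
    exact enorm_le_iff_norm_le.2 (f.norm_coe_le_norm x)
  simp_rw [← integral_indicator (hA _)]
  refine tendsto_integral_of_tendstoInDistribution_of_bounded_moment hlim hZf hp
    (C := C * ‖f‖₊ ^ p) fun i ↦ ?_
  calc ∫⁻ ω, ‖(A i).indicator (fun ω ↦ exp (g (W i ω)) * f (W i ω)) ω‖ₑ ^ p ∂P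
      = ∫⁻ ω in A i, ‖exp (g (W i ω)) * f (W i ω)‖ₑ ^ p ∂P := by
        rw [← lintegral_indicator (hA i)]
        congr with ω
        by_cases hω : ω ∈ A i <;> simp [hω, hp0]
    _ ≤ (∫⁻ ω in A i, ENNReal.ofReal (exp (p * g (W i ω))) ∂P) * ‖f‖ₑ ^ p := by
        rw [← lintegral_mul_const' _ _ (by finiteness)]
        exact lintegral_mono fun ω ↦ hpow (W i ω)
    _ ≤ C * ‖f‖ₑ ^ p := by gcongr; exact hmom i
    _ = ↑(C * ‖f‖₊ ^ p) := by
        rw [ENNReal.coe_mul, ENNReal.coe_rpow_of_nonneg _ hp0.le, enorm_eq_nnnorm]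

theorem tendsto_integral_cond_tilted
    (h : MeasureTheory.TendstoInDistribution W l Z (fun _ ↦ P) P') (hg : Continuous g)
    (hW : ∀ i, Integrable (fun ω ↦ exp (g (W i ω))) P)
    (hZ : Integrable (fun ω ↦ exp (g (Z ω))) P') (hA : ∀ i, MeasurableSet (A i))
    (hA_compl : Tendsto (fun i ↦ P (A i)ᶜ) l (𝓝 0)) {p : ℝ} (hp : 1 < p) {C : ℝ≥0}
    (hmom : ∀ i, ∫⁻ ω in A i, ENNReal.ofReal (exp (p * g (W i ω))) ∂P ≤ C)
    (f : BoundedContinuousFunction E ℝ) :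
    Tendsto (fun i ↦ ∫ ω, f (W i ω) ∂(P.tilted fun ω ↦ g (W i ω))[|A i]) l
      (𝓝 (∫ ω, f (Z ω) ∂P'.tilted fun ω ↦ g (Z ω))) := by
  have hlim := tendsto_setIntegral_exp_mul h hg hZ hA hA_compl hp hmom
  have hZ0 : ∫ ω, exp (g (Z ω)) ∂P' ≠ 0 := (integral_exp_pos hZ).ne'
  simp_rw [integral_cond_tilted (hW _) (hA _), integral_tilted, smul_eq_mul, div_mul_eq_mul_div,
    integral_div]
  refine (hlim f).div ?_ hZ0
  simpa using hlim (BoundedContinuousFunction.const E 1)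

end CondTilted

section HubbardStratonovich

open Real
open scoped ENNReal

variable {Ω : Type*} {mΩ : MeasurableSpace Ω} {P : Measure Ω} {W : Ω → ℝ} {a b κ : ℝ}

-- Completing the square, `b * w * v - b * v ^ 2 / 2 = b * w ^ 2 / 2 - b * (v - w) ^ 2 / 2`.
lemma ofReal_exp_mul_sq_le_lintegral (hb : 0 ≤ b) {w : ℝ} (hw : -a ≤ w) :
    ENNReal.ofReal (exp (b * w ^ 2 / 2)) ≤
      ENNReal.ofReal (exp (b / 2)) *
        ∫⁻ v in Set.Ioi (-a), ENNReal.ofReal (exp (b * v * w) * exp (-(b * v ^ 2 / 2))) := by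
  have hmem (v : ℝ) (hv : v ∈ Set.Ioo w (w + 1)) :
      exp (b * w ^ 2 / 2) ≤ exp (b / 2) * (exp (b * v * w) * exp (-(b * v ^ 2 / 2))) := by
    rw [← exp_add, ← exp_add, exp_le_exp]
    have : (v - w) ^ 2 ≤ 1 := by nlinarith [hv.1, hv.2]
    nlinarith
  calc ENNReal.ofReal (exp (b * w ^ 2 / 2))
      = ∫⁻ _ in Set.Ioo w (w + 1), ENNReal.ofReal (exp (b * w ^ 2 / 2)) := by simp
    _ ≤ ∫⁻ v in Set.Ioo w (w + 1), ENNReal.ofReal (exp (b / 2)) *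
          ENNReal.ofReal (exp (b * v * w) * exp (-(b * v ^ 2 / 2))) := by
        refine setLIntegral_mono' measurableSet_Ioo fun v hv ↦ ?_
        rw [← ENNReal.ofReal_mul (exp_pos _).le]
        exact ENNReal.ofReal_le_ofReal (hmem v hv)
    _ ≤ _ := by
        rw [lintegral_const_mul' _ _ ENNReal.ofReal_ne_top]
        gcongr
        exact fun v hv ↦ hw.trans_lt hv.1

lemma lintegral_exp_mul_sq_le [SFinite P] (hb : 0 < b) (hκ : b * κ < 1) (hW : Measurable W)
    (hint : ∀ t, Integrable (fun ω ↦ exp (t * W ω)) P)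
    (hmgf : ∀ t, -(b * a) ≤ t → mgf W P t ≤ exp (κ * t ^ 2 / 2)) :
    ∫⁻ ω in {ω | -a < W ω}, ENNReal.ofReal (exp (b * W ω ^ 2 / 2)) ∂P ≤
      ENNReal.ofReal (exp (b / 2) * √(π / (b * (1 - b * κ) / 2))) := by
  have hpos : 0 < b * (1 - b * κ) / 2 := by nlinarith
  have hinner (v : ℝ) (hv : v ∈ Set.Ioi (-a)) :
      ∫⁻ ω, ENNReal.ofReal (exp (b * v * W ω) * exp (-(b * v ^ 2 / 2))) ∂P ≤
        ENNReal.ofReal (exp (-(b * (1 - b * κ) / 2) * v ^ 2)) := by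
    rw [← ofReal_integral_eq_lintegral_ofReal ((hint _).mul_const _)
      (.of_forall fun ω ↦ by positivity), integral_mul_const]
    refine ENNReal.ofReal_le_ofReal ?_
    calc mgf W P (b * v) * exp (-(b * v ^ 2 / 2))
        ≤ exp (κ * (b * v) ^ 2 / 2) * exp (-(b * v ^ 2 / 2)) := by
          gcongr
          exact hmgf _ (by nlinarith [Set.mem_Ioi.1 hv])
      _ = exp (-(b * (1 - b * κ) / 2) * v ^ 2) := by
          rw [← exp_add]
          ring_nf
  calc ∫⁻ ω in {ω | -a < W ω}, ENNReal.ofReal (exp (b * W ω ^ 2 / 2)) ∂P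
      ≤ ∫⁻ ω, ENNReal.ofReal (exp (b / 2)) * (∫⁻ v in Set.Ioi (-a),
          ENNReal.ofReal (exp (b * v * W ω) * exp (-(b * v ^ 2 / 2)))) ∂P :=
        (setLIntegral_mono' (measurableSet_lt measurable_const hW) fun ω hω ↦
          ofReal_exp_mul_sq_le_lintegral hb.le (le_of_lt hω)).trans (setLIntegral_le_lintegral _ _)
    _ = ENNReal.ofReal (exp (b / 2)) * ∫⁻ v in Set.Ioi (-a), ∫⁻ ω,
          ENNReal.ofReal (exp (b * v * W ω) * exp (-(b * v ^ 2 / 2))) ∂P := by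
        rw [lintegral_const_mul' _ _ ENNReal.ofReal_ne_top,
          lintegral_lintegral_swap (by unfold Function.uncurry; fun_prop)]
    _ ≤ ENNReal.ofReal (exp (b / 2)) *
          ∫⁻ v, ENNReal.ofReal (exp (-(b * (1 - b * κ) / 2) * v ^ 2)) := by
        refine mul_le_mul_right ?_ _
        exact (setLIntegral_mono' measurableSet_Ioi hinner).trans (setLIntegral_le_lintegral _ _)
    _ = ENNReal.ofReal (exp (b / 2) * √(π / (b * (1 - b * κ) / 2))) := by
        rw [← ofReal_integral_eq_lintegral_ofReal (integrable_exp_neg_mul_sq hpos)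
          (.of_forall fun v ↦ (exp_pos _).le), integral_gaussian, ENNReal.ofReal_mul (exp_pos _).le]

lemma measure_le_neg_le_exp [IsFiniteMeasure P] (ha : 0 ≤ a) (hb : 0 ≤ b) (hκ : b * κ ≤ 1)
    (hint : Integrable (fun ω ↦ exp (-(b * a) * W ω)) P)
    (hmgf : mgf W P (-(b * a)) ≤ exp (κ * (b * a) ^ 2 / 2)) :
    P {ω | W ω ≤ -a} ≤ ENNReal.ofReal (exp (-(b * a ^ 2 / 2))) := by
  rw [← ofReal_measureReal]
  refine ENNReal.ofReal_le_ofReal ?_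
  calc P.real {ω | W ω ≤ -a} ≤ exp (-(-(b * a)) * -a) * mgf W P (-(b * a)) :=
        measure_le_le_exp_mul_mgf _ (by simpa using mul_nonneg hb ha) hint
    _ ≤ exp (-(-(b * a)) * -a) * exp (κ * (b * a) ^ 2 / 2) := by gcongr
    _ ≤ exp (-(b * a ^ 2 / 2)) := by
        rw [← exp_add, exp_le_exp]
        nlinarith [mul_nonneg hb (sq_nonneg a)]

theorem tendsto_integral_cond_tilted_sq [IsProbabilityMeasure P] {W : ℕ → Ω → ℝ} {a : ℕ → ℝ}
    {β c v : ℝ} (hW : ∀ n, Measurable (W n))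
    (hclt : MeasureTheory.TendstoInDistribution W atTop id (fun _ ↦ P) (gaussianReal 0 v.toNNReal))
    (hv : 0 < v) (hβ : 0 < β) (hβv : β * v < 1) (hβκ : β * κ < 1) (hβc : β < c)
    (ha0 : ∀ n, 0 ≤ a n) (ha : Tendsto a atTop atTop)
    (hint : ∀ n t, Integrable (fun ω ↦ exp (t * W n ω)) P)
    (hint_sq : ∀ n, Integrable (fun ω ↦ exp (β * W n ω ^ 2 / 2)) P)
    (hmgf : ∀ n t, -(c * a n) ≤ t → mgf (W n) P t ≤ exp (κ * t ^ 2 / 2))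
    (f : BoundedContinuousFunction ℝ ℝ) :
    Tendsto (fun n ↦ ∫ ω, f (W n ω) ∂(P.tilted fun ω ↦ β * W n ω ^ 2 / 2)[|{ω | -a n < W n ω}])
      atTop (𝓝 (∫ x, f x ∂gaussianReal 0 (v / (1 - β * v)).toNNReal)) := by
  obtain ⟨p, hp, hpc, hpκ⟩ : ∃ p, 1 < p ∧ p * β < c ∧ p * β * κ < 1 := by
    have hcont (q : ℝ) : Tendsto (fun p ↦ p * q) (𝓝[>] 1) (𝓝 q) :=
      ((continuous_mul_const q).tendsto' 1 q (one_mul q)).mono_left nhdsWithin_le_nhds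
    have hlt := ((hcont β).eventually_lt_const hβc).and
      ((hcont (β * κ)).eventually_lt_const hβκ)
    obtain ⟨p, hp, hpc, hpκ⟩ := (eventually_mem_nhdsWithin.and hlt).exists
    exact ⟨p, hp, hpc, by rwa [mul_assoc]⟩
  have hb : 0 < p * β := by positivity
  have hmgf_b (n : ℕ) (t : ℝ) (ht : -(p * β * a n) ≤ t) : mgf (W n) P t ≤ exp (κ * t ^ 2 / 2) :=
    hmgf n t (le_trans (by have := ha0 n; gcongr) ht)
  have hcompl : Tendsto (fun n ↦ P {ω | -a n < W n ω}ᶜ) atTop (𝓝 0) := by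
    have hexp : Tendsto (fun n ↦ exp (-(p * β * a n ^ 2 / 2))) atTop (𝓝 0) :=
      tendsto_exp_neg_atTop_nhds_zero.comp <|
        (((tendsto_pow_atTop two_ne_zero).comp ha).const_mul_atTop hb).atTop_div_const two_pos
    refine tendsto_of_tendsto_of_tendsto_of_le_of_le tendsto_const_nhds
      (by simpa using ENNReal.tendsto_ofReal hexp) (fun _ ↦ zero_le) fun n ↦ ?_
    simp_rw [Set.compl_ofPred, not_lt]
    exact measure_le_neg_le_exp (ha0 n) hb.le hpκ.le (hint n _)
      ((hmgf_b n _ le_rfl).trans_eq (by rw [neg_sq]))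
  rw [← gaussianReal_tilted_sq hv hβv]
  refine tendsto_integral_cond_tilted hclt (by fun_prop : Continuous fun x ↦ β * x ^ 2 / 2)
    hint_sq (integrable_exp_mul_sq_gaussianReal hv hβv)
    (fun n ↦ measurableSet_lt measurable_const (hW n)) hcompl hp
    (fun n ↦ (le_of_eq ?_).trans <|
      lintegral_exp_mul_sq_le hb hpκ (hW n) (hint n) (hmgf_b n)) f
  simp_rw [mul_div_assoc, mul_assoc]

end HubbardStratonovich

section Fluctuation

open Real

/-- The rescaled deviation `√n (x̄ - m)` of the sample mean of `x : Fin n → ℝ` from `m`. -/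
def fluctuation (m : ℝ) {n : ℕ} (x : Fin n → ℝ) : ℝ := √n * (sampleMean x - m)

lemma measurable_fluctuation (m : ℝ) (n : ℕ) : Measurable (fluctuation m (n := n)) := by
  unfold fluctuation sampleMean
  fun_prop

lemma fluctuation_eq (m : ℝ) {n : ℕ} (x : Fin n → ℝ) :
    fluctuation m x = (√n)⁻¹ * (∑ i, x i - n * m) := by
  obtain rfl | hn := n.eq_zero_or_pos
  · simp [fluctuation]
  rw [fluctuation, sampleMean, Fintype.card_fin, inv_mul_eq_div, eq_div_iff (by positivity),
    mul_right_comm, mul_self_sqrt n.cast_nonneg]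
  field_simp

lemma sampleMean_pos_iff (m : ℝ) {n : ℕ} (x : Fin n → ℝ) :
    0 < sampleMean x ↔ -(m * √n) < fluctuation m x := by
  obtain rfl | hn := n.eq_zero_or_pos
  · simp [fluctuation, sampleMean]
  rw [fluctuation, neg_lt_iff_pos_add, mul_comm m, ← mul_add, sub_add_cancel,
    mul_pos_iff_of_pos_left (by positivity)]

variable {Ω : Type*} {mΩ : MeasurableSpace Ω} {P : Measure Ω}

lemma mgf_fluctuation {m : ℝ} {n : ℕ} {X : Fin n → Ω → ℝ} (hX : ∀ i, Measurable (X i))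
    (hindep : iIndepFun X P) (t : ℝ) :
    mgf (fun ω ↦ fluctuation m fun i ↦ X i ω) P t =
      exp (-(m * √n * t)) * ∏ i, mgf (X i) P (t / √n) := by
  rw [← hindep.mgf_sum hX, mgf, mgf, ← integral_const_mul]
  refine integral_congr_ae (.of_forall fun ω ↦ ?_)
  have hn : (√n)⁻¹ * n = √n := by rw [inv_mul_eq_div, div_sqrt]
  beta_reduce
  rw [fluctuation_eq, ← exp_add, Finset.sum_apply]
  congr 1
  linear_combination -(t * m) * hn

lemma mgf_fluctuation_le {m κ c : ℝ} {n : ℕ} {X : Fin n → Ω → ℝ} (hX : ∀ i, Measurable (X i))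
    (hindep : iIndepFun X P) (hκ : 0 ≤ κ)
    (hmgf : ∀ i u, -c ≤ u → mgf (X i) P u ≤ exp (m * u + κ * u ^ 2 / 2)) {t : ℝ}
    (ht : -(c * √n) ≤ t) :
    mgf (fun ω ↦ fluctuation m fun i ↦ X i ω) P t ≤ exp (κ * t ^ 2 / 2) := by
  rw [mgf_fluctuation hX hindep]
  obtain rfl | hn := n.eq_zero_or_pos
  · simpa using (by positivity : 0 ≤ κ * t ^ 2 / 2)
  have hn' : 0 < √n := by positivity
  calc exp (-(m * √n * t)) * ∏ i, mgf (X i) P (t / √n)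
      ≤ exp (-(m * √n * t)) * ∏ _i : Fin n, exp (m * (t / √n) + κ * (t / √n) ^ 2 / 2) := by
        gcongr with i
        · exact fun _ _ ↦ mgf_nonneg
        · exact hmgf i _ (by rwa [le_div_iff₀ hn', neg_mul])
    _ = exp (κ * t ^ 2 / 2) := by
        rw [← exp_sum, ← exp_add, Fin.sum_const, nsmul_eq_mul]
        congr 1
        have hn_sq : √n ^ 2 = n := sq_sqrt n.cast_nonneg
        field_simp
        linear_combination (-(κ * t ^ 2) - 2 * m * t * √n) * hn_sq

lemma tendstoInDistribution_fluctuation [IsProbabilityMeasure P] {Ω' : Type*}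
    {mΩ' : MeasurableSpace Ω'} {P' : Measure Ω'} [IsProbabilityMeasure P'] {X : ℕ → Ω → ℝ}
    {Y : Ω' → ℝ} (hY : HasLaw Y (gaussianReal 0 Var[X 0; P].toNNReal) P') (hX : MemLp (X 0) 2 P)
    (hindep : iIndepFun X P) (hident : ∀ k, IdentDistrib (X k) (X 0) P P) :
    MeasureTheory.TendstoInDistribution
      (fun n ω ↦ fluctuation P[X 0] fun i : Fin n ↦ X i ω) atTop Y (fun _ ↦ P) P' := by
  simpa only [fluctuation_eq, Finset.sum_range] using
    tendstoInDistribution_inv_sqrt_mul_sum_sub hY hX hindep hident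

end Fluctuation

section FreeEnergy

open Real Set

lemma hasDerivAt_tanh (x : ℝ) : HasDerivAt tanh (cosh x ^ 2)⁻¹ x := by
  have hquot := (hasDerivAt_sinh x).div (hasDerivAt_cosh x) (cosh_pos x).ne'
  refine (hquot.congr_deriv ?_).congr_of_eventuallyEq (.of_forall tanh_eq_sinh_div_cosh)
  rw [← sq, ← sq, cosh_sq_sub_sinh_sq, one_div]

lemma one_sub_tanh_sq (x : ℝ) : 1 - tanh x ^ 2 = (cosh x ^ 2)⁻¹ := by
  have := (cosh_pos x).ne'
  rw [tanh_eq_sinh_div_cosh]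
  field_simp
  exact cosh_sq_sub_sinh_sq x

lemma strictAntiOn_inv_cosh_sq : StrictAntiOn (fun x ↦ (cosh x ^ 2)⁻¹) (Ici 0) := by
  intro x hx y hy hxy
  have := cosh_strictMonoOn hx hy hxy
  have := cosh_pos x
  dsimp only
  gcongr

lemma strictConcaveOn_tanh : StrictConcaveOn ℝ (Ici 0) tanh := by
  have hderiv : deriv tanh = fun x ↦ (cosh x ^ 2)⁻¹ := funext fun x ↦ (hasDerivAt_tanh x).deriv
  refine StrictAntiOn.strictConcaveOn_of_deriv (convex_Ici 0)
    (fun x _ ↦ (hasDerivAt_tanh x).continuousAt.continuousWithinAt) ?_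
  rw [hderiv]
  exact strictAntiOn_inv_cosh_sq.mono interior_subset

lemma hasDerivAt_log_cosh (x : ℝ) : HasDerivAt (fun x ↦ log (cosh x)) (tanh x) x := by
  simpa only [← tanh_eq_sinh_div_cosh] using (hasDerivAt_cosh x).log (cosh_pos x).ne'

lemma add_mul_sq_le_of_two_mul_le_deriv2 {s : Set ℝ} (hs : Convex ℝ s) {f f' f'' : ℝ → ℝ} {x ε : ℝ}
    (hx : x ∈ interior s) (hf : ∀ y, HasDerivAt f (f' y) y) (hf' : ∀ y, HasDerivAt f' (f'' y) y)
    (hcrit : f' x = 0) (hε : ∀ y ∈ interior s, 2 * ε ≤ f'' y) {y : ℝ} (hy : y ∈ s) :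
    f x + ε * (y - x) ^ 2 ≤ f y := by
  have hg (z : ℝ) : HasDerivAt (fun z ↦ f z - ε * (z - x) ^ 2) (f' z - 2 * ε * (z - x)) z := by
    refine ((hf z).sub ((((hasDerivAt_id z).sub_const x).pow 2).const_mul ε)).congr_deriv ?_
    simp only [id, Nat.cast_ofNat, Nat.add_one_sub_one, pow_one, mul_one]
    ring
  have hg' (z : ℝ) : HasDerivAt (fun z ↦ f' z - 2 * ε * (z - x)) (f'' z - 2 * ε) z := by
    exact ((hf' z).sub (((hasDerivAt_id z).sub_const x).const_mul (2 * ε))).congr_deriv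
      (by rw [mul_one])
  have hconv : ConvexOn ℝ s fun z ↦ f z - ε * (z - x) ^ 2 :=
    convexOn_of_hasDerivWithinAt2_nonneg hs (fun z _ ↦ (hg z).continuousAt.continuousWithinAt)
      (fun z _ ↦ (hg z).hasDerivWithinAt) (fun z _ ↦ (hg' z).hasDerivWithinAt)
      fun z hz ↦ sub_nonneg.2 (hε z hz)
  have hmin := hconv.isMinOn_of_rightDeriv_eq_zero hx <| by
    rw [(hg x).hasDerivWithinAt.derivWithin (uniqueDiffWithinAt_Ioi x), hcrit, sub_self, mul_zero,
      sub_zero]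
  have := hmin hy
  simp only [sub_self, mem_ofPred_eq] at this
  linarith

/-- The mean-field free energy of the Curie–Weiss model at inverse temperature `β`, as a function
of the effective field `y = β m`; its critical points are the solutions of `y / β = tanh y`. -/
def freeEnergy (β y : ℝ) : ℝ := y ^ 2 / (2 * β) - log (cosh y)

lemma freeEnergy_abs (β y : ℝ) : freeEnergy β |y| = freeEnergy β y := by
  rw [freeEnergy, freeEnergy, sq_abs, cosh_abs]

lemma hasDerivAt_freeEnergy (β y : ℝ) : HasDerivAt (freeEnergy β) (y / β - tanh y) y := by
  refine (((hasDerivAt_pow 2 y).div_const (2 * β)).sub (hasDerivAt_log_cosh y)).congr_deriv ?_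
  simp only [Nat.cast_ofNat, Nat.add_one_sub_one, pow_one]
  rw [mul_div_mul_left _ _ two_ne_zero]

section CriticalPoint

variable {β h : ℝ}

lemma inv_cosh_sq_lt_of_tanh_eq (hh : 0 < h) (hroot : tanh h = h / β) :
    (cosh h ^ 2)⁻¹ < β⁻¹ := by
  have hslope := strictConcaveOn_tanh.lt_slope_of_hasDerivWithinAt self_mem_Ici hh.le hh
    (hasDerivAt_tanh h).hasDerivWithinAt
  rwa [slope_def_field, tanh_zero, sub_zero, sub_zero, hroot, div_div_cancel_left' hh.ne']
    at hslope

lemma mul_one_sub_tanh_sq_lt_one (hβ : 0 < β) (hh : 0 < h) (hroot : tanh h = h / β) :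
    β * (1 - tanh h ^ 2) < 1 := by
  rw [one_sub_tanh_sq, ← lt_inv_mul_iff₀ hβ, mul_one]
  exact inv_cosh_sq_lt_of_tanh_eq hh hroot

lemma antitoneOn_freeEnergy (hh : 0 < h) (hroot : tanh h = h / β) :
    AntitoneOn (freeEnergy β) (Icc 0 h) := by
  refine antitoneOn_of_hasDerivWithinAt_nonpos (convex_Icc 0 h)
    (fun y _ ↦ (hasDerivAt_freeEnergy β y).continuousAt.continuousWithinAt)
    (fun y _ ↦ (hasDerivAt_freeEnergy β y).hasDerivWithinAt) fun y hy ↦ ?_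
  rw [interior_Icc] at hy
  have hchord := strictConcaveOn_tanh.concaveOn.2 (self_mem_Ici (a := (0 : ℝ))) hh.le
    (sub_nonneg.2 ((div_le_one hh).2 hy.2.le)) (div_nonneg hy.1.le hh.le) (sub_add_cancel _ _)
  simp only [tanh_zero, mul_zero, zero_add, smul_eq_mul, div_mul_cancel₀ y hh.ne', hroot,
    div_mul_div_cancel₀ hh.ne'] at hchord
  linarith

lemma exists_freeEnergy_growth_right (hh : 0 < h) (hroot : tanh h = h / β) {c : ℝ} (hc : 0 ≤ c)
    (hch : c < h) :
    ∃ a ∈ Ioo c h, ∃ ε > 0, ∀ y, a ≤ y → freeEnergy β h + ε * (y - h) ^ 2 ≤ freeEnergy β y := by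
  have hcont : ContinuousAt (fun y ↦ (cosh y ^ 2)⁻¹) h :=
    (continuous_cosh.pow 2).continuousAt.inv₀ (pow_ne_zero 2 (cosh_pos h).ne')
  obtain ⟨a, hach, ha⟩ : ∃ a ∈ Ioo c h, (cosh a ^ 2)⁻¹ < β⁻¹ :=
    ((eventually_mem_set.2 (Ioo_mem_nhdsLT hch)).and ((hcont.eventually_lt_const
      (inv_cosh_sq_lt_of_tanh_eq hh hroot)).filter_mono nhdsWithin_le_nhds)).exists
  have hderiv2 (y : ℝ) : HasDerivAt (fun y ↦ y / β - tanh y) (β⁻¹ - (cosh y ^ 2)⁻¹) y :=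
    (((hasDerivAt_id y).div_const β).sub (hasDerivAt_tanh y)).congr_deriv (by rw [one_div])
  refine ⟨a, hach, (β⁻¹ - (cosh a ^ 2)⁻¹) / 2, half_pos (sub_pos.2 ha), fun y hy ↦ ?_⟩
  refine add_mul_sq_le_of_two_mul_le_deriv2 (convex_Ici a) (by rw [interior_Ici]; exact hach.2)
    (hasDerivAt_freeEnergy β) hderiv2 (by rw [hroot, sub_self]) (fun z hz ↦ ?_) hy
  rw [interior_Ici] at hz
  have ha0 : 0 ≤ a := hc.trans hach.1.le
  linarith [strictAntiOn_inv_cosh_sq ha0 (ha0.trans hz.le) hz]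

/-- The lower bound `-c` keeps `y` away from the other minimum `-h`, where growth fails. -/
lemma exists_freeEnergy_growth (hh : 0 < h) (hroot : tanh h = h / β) {c : ℝ} (hc : 0 ≤ c)
    (hch : c < h) :
    ∃ ε > 0, ∀ y, -c ≤ y → freeEnergy β h + ε * (y - h) ^ 2 ≤ freeEnergy β y := by
  obtain ⟨a, ⟨hca, hah⟩, ε, hε, hright⟩ := exists_freeEnergy_growth_right hh hroot hc hch
  set ρ := ((h - a) / (2 * h)) ^ 2 with hρ
  have hρ_pos : 0 < ρ := by have := sub_pos.2 hah; positivity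
  have hρ_le : ρ ≤ 1 := pow_le_one₀ (div_nonneg (sub_nonneg.2 hah.le) (by positivity))
    ((div_le_one (by positivity)).2 (by linarith))
  refine ⟨ε * ρ, mul_pos hε hρ_pos, fun y hy ↦ ?_⟩
  obtain hay | hya := le_total a y
  · refine le_trans ?_ (hright y hay)
    gcongr
    exact mul_le_of_le_one_right hε.le hρ_le
  have hy_abs : |y| ≤ a := abs_le.2 ⟨by linarith, hya⟩
  have hy_sq : (y - h) ^ 2 ≤ (2 * h) ^ 2 := sq_le_sq' (by linarith) (by linarith)
  calc freeEnergy β h + ε * ρ * (y - h) ^ 2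
      ≤ freeEnergy β h + ε * ρ * (2 * h) ^ 2 := by gcongr
    _ = freeEnergy β h + ε * (a - h) ^ 2 := by rw [hρ]; field_simp; ring
    _ ≤ freeEnergy β a := hright a le_rfl
    _ ≤ freeEnergy β |y| := antitoneOn_freeEnergy hh hroot ⟨abs_nonneg y, hy_abs.trans hah.le⟩
        ⟨hc.trans hca.le, hah.le⟩ hy_abs
    _ = freeEnergy β y := freeEnergy_abs β y

/-- `log (cosh (h + u) / cosh h) - tanh h * u` is the cumulant generating function of a centred spin
in the field `h`. -/
lemma exists_cosh_add_div_cosh_le (hh : 0 < h) (hroot : tanh h = h / β) {c : ℝ} (hc : 0 ≤ c)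
    (hch : c < h) :
    ∃ κ ∈ Ico 0 β⁻¹, ∀ u, -(h + c) ≤ u →
      cosh (h + u) / cosh h ≤ exp (tanh h * u + κ * u ^ 2 / 2) := by
  obtain ⟨ε, hε, hgrowth⟩ := exists_freeEnergy_growth hh hroot hc hch
  have hβ : 0 < β⁻¹ := (by positivity : 0 < (cosh h ^ 2)⁻¹).trans
    (inv_cosh_sq_lt_of_tanh_eq hh hroot)
  refine ⟨max 0 (β⁻¹ - 2 * ε), ⟨le_max_left _ _, max_lt hβ (by linarith)⟩, fun u hu ↦ ?_⟩
  have hgrowth_u := hgrowth (h + u) (by linarith)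
  rw [← log_le_iff_le_exp (by positivity), log_div (by positivity) (by positivity), hroot]
  calc log (cosh (h + u)) - log (cosh h) ≤ h / β * u + (β⁻¹ - 2 * ε) * u ^ 2 / 2 := by
        simp only [freeEnergy] at hgrowth_u
        linear_combination hgrowth_u
    _ ≤ h / β * u + max 0 (β⁻¹ - 2 * ε) * u ^ 2 / 2 := by
        gcongr
        exact le_max_right _ _

end CriticalPoint

end FreeEnergy

section Spins

open Real
open scoped ENNReal

/-- The counting measure on `{-1, 1}`, as a measure on `ℝ`; the reference measure of a spin. -/
def signCount : Measure ℝ := Measure.dirac 1 + Measure.dirac (-1)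

/-- The law of a single spin in the external field `h`: it gives mass proportional to `exp (h * s)`
to `s ∈ {-1, 1}`. -/
def spinLaw (h : ℝ) : Measure ℝ := signCount.tilted fun s ↦ h * s

instance : IsFiniteMeasure signCount := by unfold signCount; infer_instance

instance : NeZero signCount := ⟨fun h ↦ by simpa [signCount] using DFunLike.congr_fun h Set.univ⟩

lemma integrable_signCount (f : ℝ → ℝ) : Integrable f signCount :=
  (integrable_dirac enorm_lt_top).add_measure (integrable_dirac enorm_lt_top)

lemma integral_signCount (f : ℝ → ℝ) : ∫ s, f s ∂signCount = f 1 + f (-1) := by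
  rw [signCount, integral_add_measure (integrable_dirac enorm_lt_top)
    (integrable_dirac enorm_lt_top), integral_dirac, integral_dirac]

lemma ae_signCount_sq_eq_one : ∀ᵐ s ∂signCount, s ^ 2 = 1 := by
  simp [signCount, ae_add_measure_iff, ae_dirac_eq]

instance (h : ℝ) : IsProbabilityMeasure (spinLaw h) :=
  isProbabilityMeasure_tilted (integrable_signCount _)

lemma integral_spinLaw (h : ℝ) (f : ℝ → ℝ) :
    ∫ s, f s ∂spinLaw h = (exp h * f 1 + exp (-h) * f (-1)) / (2 * cosh h) := by
  rw [spinLaw, integral_tilted, integral_signCount, integral_signCount, cosh_eq]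
  simp only [smul_eq_mul, mul_one, mul_neg]
  field

lemma integral_id_spinLaw (h : ℝ) : ∫ s, s ∂spinLaw h = tanh h := by
  rw [integral_spinLaw, tanh_eq_sinh_div_cosh, sinh_eq]
  field

lemma memLp_id_spinLaw (h : ℝ) : MemLp id 2 (spinLaw h) :=
  (memLp_two_iff_integrable_sq aestronglyMeasurable_id).2 <|
    (integrable_tilted_iff (integrable_signCount _) _).2 (integrable_signCount _)

lemma variance_id_spinLaw (h : ℝ) : Var[id; spinLaw h] = 1 - tanh h ^ 2 := by
  have hsq : ∫ s, s ^ 2 ∂spinLaw h = 1 := by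
    rw [integral_spinLaw, cosh_eq]
    field
  rw [variance_eq_sub (memLp_id_spinLaw h)]
  simp [integral_id_spinLaw, hsq]

lemma mgf_id_spinLaw (h u : ℝ) : mgf id (spinLaw h) u = cosh (h + u) / cosh h := by
  rw [mgf, integral_spinLaw, cosh_eq (h + u)]
  simp only [id_eq, mul_one, mul_neg, ← exp_add, neg_add]
  field

lemma pi_signCount (ι : Type*) [Fintype ι] [DecidableEq ι] :
    Measure.pi (fun _ : ι ↦ signCount) = ∑ s : ι → Bool, Measure.dirac (pmVec s) := by
  refine Measure.pi_eq fun t ht ↦ ?_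
  have hsign (i : ι) :
      signCount (t i) = ∑ b : Bool, (t i).indicator 1 (if b then (1 : ℝ) else -1) := by
    simp [signCount, Measure.dirac_apply' _ (ht i)]
  simp_rw [hsign]
  rw [Finset.prod_univ_sum, Fintype.piFinset_univ, Measure.finsetSum_apply]
  refine Finset.sum_congr rfl fun s _ ↦ ?_
  rw [Measure.dirac_apply' _ (MeasurableSet.univ_pi ht)]
  classical
  simp [Set.indicator_apply, Finset.prod_ite_zero, pmVec]

lemma integrable_pi_signCount {ι : Type*} [Fintype ι] (F : (ι → ℝ) → ℝ) :
    Integrable F (Measure.pi fun _ ↦ signCount) := by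
  classical
  rw [pi_signCount, integrable_finsetSum_measure]
  exact fun s _ ↦ integrable_dirac enorm_lt_top

lemma pi_spinLaw {ι : Type*} [Fintype ι] (h : ℝ) :
    (Measure.pi fun _ : ι ↦ spinLaw h) =
      (Measure.pi fun _ ↦ signCount).tilted fun x ↦ h * ∑ i, x i := by
  simp_rw [spinLaw, pi_tilted, Finset.mul_sum]

lemma integrable_pi_spinLaw {ι : Type*} [Fintype ι] (h : ℝ) (F : (ι → ℝ) → ℝ) :
    Integrable F (Measure.pi fun _ ↦ spinLaw h) := by
  rw [pi_spinLaw, integrable_tilted_iff (integrable_pi_signCount _)]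
  exact integrable_pi_signCount _

lemma isingMeasure_eq_tilted (ι : Type*) [Fintype ι] [DecidableEq ι] (β : ℝ) (Q : Matrix ι ι ℝ) :
    isingMeasure ι β Q =
      (Measure.pi fun _ ↦ signCount).tilted fun x ↦ β / 2 * (x ⬝ᵥ Q.mulVec x) := by
  rw [pi_signCount, sum_dirac_tilted]
  rfl

lemma dotProduct_QCW_mulVec {n : ℕ} (x : Fin n → ℝ) :
    x ⬝ᵥ (QCW n).mulVec x = (n : ℝ)⁻¹ * ((∑ i, x i) ^ 2 - ∑ i, x i ^ 2) := by
  have hrow (i : Fin n) : (QCW n).mulVec x i = (n : ℝ)⁻¹ * (∑ j, x j - x i) := by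
    have hQ (j : Fin n) : QCW n i j * x j = (n : ℝ)⁻¹ * (x j - if i = j then x j else 0) := by
      by_cases hij : i = j <;> simp [QCW, hij]
    simp only [mulVec, dotProduct, hQ, ← Finset.mul_sum, Finset.sum_sub_distrib,
      Finset.sum_ite_eq, Finset.mem_univ, if_true]
  simp_rw [dotProduct, hrow, mul_left_comm (x _), ← Finset.mul_sum, mul_sub (x _),
    Finset.sum_sub_distrib, ← Finset.sum_mul, sq]

lemma isingMeasure_QCW_eq_tilted (n : ℕ) (β m : ℝ) :
    isingMeasure (Fin n) β (QCW n) =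
      (Measure.pi fun _ ↦ spinLaw (β * m)).tilted fun x ↦ β * fluctuation m x ^ 2 / 2 := by
  have hsq : ∀ᵐ x : Fin n → ℝ ∂Measure.pi fun _ ↦ signCount, ∀ i, x i ^ 2 = 1 :=
    eventually_all.2 fun i ↦
      (Measure.tendsto_eval_ae_ae (i := i)).eventually (p := (· ^ 2 = 1)) ae_signCount_sq_eq_one
  rw [isingMeasure_eq_tilted, pi_spinLaw, tilted_tilted (integrable_pi_signCount _),
    ← tilted_add_const _ _ (β / 2 * ((n : ℝ)⁻¹ * n + n * m ^ 2))]
  refine tilted_congr (hsq.mono fun x hx ↦ ?_)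
  simp only [dotProduct_QCW_mulVec, hx, fluctuation_eq, Pi.add_apply, mul_pow, inv_pow,
    sq_sqrt n.cast_nonneg, Finset.sum_const, Finset.card_univ, Fintype.card_fin, nsmul_eq_mul]
  obtain rfl | hn := n.eq_zero_or_pos
  · simp
  field

section IID

variable {Ω : Type*} {mΩ : MeasurableSpace Ω} {P : Measure Ω} {h : ℝ} {X : ℕ → Ω → ℝ}

lemma integrable_comp_spins (hlaw : ∀ k, HasLaw (X k) (spinLaw h) P) (hindep : iIndepFun X P)
    {n : ℕ} (F : (Fin n → ℝ) → ℝ) : Integrable (fun ω ↦ F fun i ↦ X i ω) P := by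
  have hpi := (hindep.precomp Fin.val_injective).hasLaw_pi fun i : Fin n ↦ hlaw i
  have hF := integrable_pi_spinLaw h F
  rw [← hpi.map_eq] at hF
  exact hF.comp_aemeasurable hpi.aemeasurable

lemma hasLaw_isingMeasure_QCW {β m : ℝ} (hX : ∀ k, Measurable (X k))
    (hlaw : ∀ k, HasLaw (X k) (spinLaw (β * m)) P) (hindep : iIndepFun X P) (n : ℕ) :
    HasLaw (fun ω (i : Fin n) ↦ X i ω) (isingMeasure (Fin n) β (QCW n))
      (P.tilted fun ω ↦ β * fluctuation m (fun i : Fin n ↦ X i ω) ^ 2 / 2) where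
  map_eq := by
    have hpi := (hindep.precomp Fin.val_injective).hasLaw_pi fun i : Fin n ↦ hlaw i
    have hfluct := measurable_fluctuation m n
    rw [isingMeasure_QCW_eq_tilted n β m, ← hpi.map_eq,
      ← map_tilted_comp (by fun_prop) (by fun_prop)]
    rfl

lemma tendstoInDistribution_fluctuation_spins [IsProbabilityMeasure P]
    (hlaw : ∀ k, HasLaw (X k) (spinLaw h) P) (hindep : iIndepFun X P) :
    MeasureTheory.TendstoInDistribution (fun n ω ↦ fluctuation (tanh h) fun i : Fin n ↦ X i ω)
      atTop id (fun _ ↦ P) (gaussianReal 0 (1 - tanh h ^ 2).toNNReal) := by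
  have hident (k : ℕ) : IdentDistrib (X k) (X 0) P P :=
    ⟨(hlaw k).aemeasurable, (hlaw 0).aemeasurable, by rw [(hlaw k).map_eq, (hlaw 0).map_eq]⟩
  have hmem : MemLp (X 0) 2 P := by
    have := memLp_id_spinLaw h
    rw [← (hlaw 0).map_eq] at this
    exact this.comp_of_map (hlaw 0).aemeasurable
  have hY : HasLaw id (gaussianReal 0 Var[X 0; P].toNNReal)
      (gaussianReal 0 (1 - tanh h ^ 2).toNNReal) := by
    rw [(hlaw 0).variance_eq, variance_id_spinLaw]
    exact .id
  simpa only [(hlaw 0).integral_eq, integral_id_spinLaw] using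
    tendstoInDistribution_fluctuation hY hmem hindep hident

lemma exists_mgf_fluctuation_spins_le {β : ℝ} (hh : 0 < h) (hroot : tanh h = h / β) {c : ℝ}
    (hc : 0 ≤ c) (hch : c < h) (hX : ∀ k, Measurable (X k))
    (hlaw : ∀ k, HasLaw (X k) (spinLaw h) P) (hindep : iIndepFun X P) :
    ∃ κ < β⁻¹, ∀ (n : ℕ) (t : ℝ), -((h + c) * √n) ≤ t →
      mgf (fun ω ↦ fluctuation (tanh h) fun i : Fin n ↦ X i ω) P t ≤ exp (κ * t ^ 2 / 2) := by
  obtain ⟨κ, ⟨hκ0, hκ⟩, hcosh⟩ := exists_cosh_add_div_cosh_le hh hroot hc hch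
  refine ⟨κ, hκ, fun n t ht ↦ mgf_fluctuation_le (X := fun i : Fin n ↦ X i) (fun i ↦ hX i)
    (hindep.precomp Fin.val_injective) hκ0 (fun i u hu ↦ ?_) ht⟩
  rw [← mgf_id_map (hlaw i).aemeasurable, (hlaw i).map_eq, mgf_id_spinLaw]
  exact hcosh u hu

lemma hasLaw_fluctuation_cond {β m : ℝ} (hX : ∀ k, Measurable (X k))
    (hlaw : ∀ k, HasLaw (X k) (spinLaw (β * m)) P) (hindep : iIndepFun X P) (n : ℕ) :
    HasLaw (fun ω ↦ fluctuation m fun i : Fin n ↦ X i ω)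
      ((isingMeasure (Fin n) β (QCW n))[|{x | 0 < sampleMean x}].map (fluctuation m))
      ((P.tilted fun ω ↦ β * fluctuation m (fun i : Fin n ↦ X i ω) ^ 2 / 2)[|
        {ω | -(m * √n) < fluctuation m fun i : Fin n ↦ X i ω}]) := by
  have hfluct := measurable_fluctuation m n
  simp_rw [sampleMean_pos_iff m]
  exact HasLaw.comp (Y := fluctuation m) ⟨hfluct.aemeasurable, rfl⟩ <|
    hasLaw_cond (hasLaw_isingMeasure_QCW hX hlaw hindep n)
      (measurableSet_lt measurable_const hfluct)

theorem tendsto_integral_fluctuation_cond_tilted [IsProbabilityMeasure P] {β m : ℝ} (hβ : 0 < β)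
    (hm : 0 < m) (hroot : m = tanh (β * m)) (hX : ∀ k, Measurable (X k))
    (hlaw : ∀ k, HasLaw (X k) (spinLaw (β * m)) P) (hindep : iIndepFun X P)
    (f : BoundedContinuousFunction ℝ ℝ) :
    Tendsto (fun n : ℕ ↦ ∫ ω, f (fluctuation m fun i : Fin n ↦ X i ω)
        ∂(P.tilted fun ω ↦ β * fluctuation m (fun i : Fin n ↦ X i ω) ^ 2 / 2)[|
          {ω | -(m * √n) < fluctuation m fun i : Fin n ↦ X i ω}])
      atTop (𝓝 (∫ x, f x ∂gaussianReal 0 ((1 - m ^ 2) / (1 - β * (1 - m ^ 2))).toNNReal)) := by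
  have hh : 0 < β * m := mul_pos hβ hm
  have htanh : tanh (β * m) = β * m / β := by rw [← hroot, mul_div_cancel_left₀ m hβ.ne']
  have hβv : β * (1 - m ^ 2) < 1 := by
    simpa only [← hroot] using mul_one_sub_tanh_sq_lt_one hβ hh htanh
  have hv : 0 < 1 - m ^ 2 := by
    rw [sub_pos, hroot]
    exact tanh_sq_lt_one _
  have hm_sqrt : Tendsto (fun n : ℕ ↦ m * √n) atTop atTop :=
    (tendsto_sqrt_atTop.comp tendsto_natCast_atTop_atTop).const_mul_atTop hm
  obtain ⟨κ, hκ, hmgf⟩ := exists_mgf_fluctuation_spins_le hh htanh (half_pos hh).le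
    (half_lt_self hh) hX hlaw hindep
  have hclt := tendstoInDistribution_fluctuation_spins hlaw hindep
  rw [← hroot] at hmgf hclt
  exact tendsto_integral_cond_tilted_sq (c := 3 / 2 * β)
    (fun n ↦ (measurable_fluctuation m n).comp (measurable_pi_lambda _ fun i ↦ hX i)) hclt hv hβ
    hβv ((lt_inv_mul_iff₀ hβ).1 (by rwa [mul_one])) (by linarith)
    (fun n ↦ mul_nonneg hm.le (sqrt_nonneg n)) hm_sqrt
    (fun n t ↦ integrable_comp_spins hlaw hindep fun x ↦ exp (t * fluctuation m x))
    (fun n ↦ integrable_comp_spins hlaw hindep fun x ↦ exp (β * fluctuation m x ^ 2 / 2))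
    (fun n t ht ↦ hmgf n t (by convert ht using 1; ring)) f

end IID

end Spins

/-- **(Curie–Weiss CLT, supercritical `β > 1`).** If `X ~ P_{β,Q^{CW}}` with `β > 1` and `m`
is the unique positive root of `m = tanh(βm)`, then conditionally on `{X̄ₙ > 0}`,
`√n (X̄ₙ - m) →d N(0, (1-m²)/(1-β(1-m²)))`. -/
theorem curieWeiss_clt_supercritical (β : ℝ) (hβ : 1 < β) (m : ℝ) (hm : 0 < m)
    (hroot : m = Real.tanh (β * m)) :
    TendstoInDistribution
      (fun n => Measure.map (fun x : Fin n → ℝ => Real.sqrt n * (sampleMean x - m))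
        (ProbabilityTheory.cond (isingMeasure (Fin n) β (QCW n)) {x | 0 < sampleMean x}))
      (gaussianReal 0 (Real.toNNReal ((1 - m ^ 2) / (1 - β * (1 - m ^ 2))))) := by
  intro f
  obtain ⟨Ω, _, P, X, hX, hlaw, hindep, _⟩ := exists_iid ℕ (spinLaw (β * m))
  have hlim := tendsto_integral_fluctuation_cond_tilted (one_pos.trans hβ) hm hroot hX hlaw hindep f
  refine hlim.congr fun n ↦ ?_
  exact (hasLaw_fluctuation_cond hX hlaw hindep n).integral_comp
    f.continuous.measurable.aestronglyMeasurable

end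
end

section
/- For every σ² ≥ 1 there exists a sequence of n×n positive semidefinite covariance matrices Σ_n such that, with X, Y ~ N(0, Σ_n) independent centered Gaussian vectors in R^n, the sample correlation satisfies √n · ρ_n → N(0, σ²) in distribution. (Explicitly, with l_0 = ⌈n/σ²⌉, one may take Σ_n = (1/n)11ᵀ + Σ_{i=2}^{n} λ̃_{i−1} v_i v_iᵀ, where (1/√n)1, v_2, …, v_n is any orthonormal basis of R^n and λ̃_1 = … = λ̃_{l_0} = 1, λ̃_i = 0 for i > l_0.) -/
open MeasureTheory ProbabilityTheory Filter Topology Matrix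

noncomputable section

/-- Sample correlation `ρₙ`. -/
def sampleCorr {ι : Type*} [Fintype ι] (x y : ι → ℝ) : ℝ :=
  (∑ i, (x i - sampleMean x) * (y i - sampleMean y)) /
    (Real.sqrt (∑ i, (x i - sampleMean x) ^ 2) * Real.sqrt (∑ i, (y i - sampleMean y) ^ 2))

/-- Convergence in probability to a constant, for a sequence of laws on `ℝ`. -/
def TendstoInProbability (μ : ℕ → Measure ℝ) (c : ℝ) : Prop :=
  ∀ ε : ℝ, 0 < ε → Tendsto (fun n => μ n {x | ε ≤ |x - c|}) atTop (𝓝 0)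

/-- `μ` is the centered multivariate Gaussian law `N(0, S)` on `ℝ^n`, characterized à la
Cramér–Wold: every linear functional `⟨a, ·⟩` has law `N(0, aᵀ S a)`. -/
def IsCenteredGaussian {n : ℕ} (μ : Measure (Fin n → ℝ)) (S : Matrix (Fin n) (Fin n) ℝ) : Prop :=
  IsProbabilityMeasure μ ∧
    ∀ a : Fin n → ℝ,
      Measure.map (fun x => ∑ i, a i * x i) μ =
        gaussianReal 0 (Real.toNNReal (a ⬝ᵥ S.mulVec a))

/-!
Take `Σₙ = A Aᵀ`, where the `l` columns of `A` are orthonormal and orthogonal to the all-ones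
vector. Then `N(0, Σₙ)` is the law of `A x` with `x` standard Gaussian in `ℝˡ`, centring does
nothing to `A x`, and `A` preserves inner products, so `ρₙ` has the law of the cosine of the angle
between two independent standard Gaussian vectors of `ℝˡ`. The squared norms of these vectors
divided by `l` tend to `1` almost surely, so the central limit theorem for `∑ x k * y k` and
Slutsky's theorem give `√l ρₙ → N(0, 1)`. Letting `l / n → 1 / σ²` inflates the variance to `σ²`.
The constant direction of the paper's `Σₙ` is omitted, as centring would remove it anyway.
-/

section Orthonormal

variable {𝕜 E : Type*} [RCLike 𝕜] [NormedAddCommGroup E] [InnerProductSpace 𝕜 E]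

lemma exists_orthonormal_mem_of_card_le_finrank {κ : Type*} [Fintype κ] {W : Submodule 𝕜 E}
    [FiniteDimensional 𝕜 W] (hκ : Fintype.card κ ≤ Module.finrank 𝕜 W) :
    ∃ v : κ → E, Orthonormal 𝕜 v ∧ ∀ k, v k ∈ W := by
  let b := stdOrthonormalBasis 𝕜 W
  obtain ⟨e⟩ : Nonempty (κ ↪ Fin (Module.finrank 𝕜 W)) :=
    Function.Embedding.nonempty_of_card_le (by rwa [Fintype.card_fin])
  exact ⟨fun k => b (e k), (b.orthonormal.comp e e.injective).comp_linearIsometry W.subtypeₗᵢ,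
    fun k => (b (e k)).2⟩

lemma finrank_sub_one_le_finrank_orthogonal_span_singleton [FiniteDimensional 𝕜 E] (w : E) :
    Module.finrank 𝕜 E - 1 ≤ Module.finrank 𝕜 (𝕜 ∙ w)ᗮ := by
  have hsum := (𝕜 ∙ w).finrank_add_finrank_orthogonal
  have hspan : Module.finrank 𝕜 (𝕜 ∙ w) ≤ 1 := by simpa using finrank_span_le_card (R := 𝕜) {w}
  omega

end Orthonormal

section CosineSimilarity

variable {ι κ : Type*} [Fintype ι] [Fintype κ]

/-- The cosine of the angle between two vectors: the sample correlation without centring.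
It is `0` if one of the vectors vanishes. -/
def cosineSimilarity (x y : ι → ℝ) : ℝ := x ⬝ᵥ y / (√(x ⬝ᵥ x) * √(y ⬝ᵥ y))

lemma measurable_cosineSimilarity :
    Measurable fun p : (ι → ℝ) × (ι → ℝ) => cosineSimilarity p.1 p.2 := by
  unfold cosineSimilarity dotProduct
  fun_prop

lemma measurable_sampleCorr :
    Measurable fun p : (ι → ℝ) × (ι → ℝ) => sampleCorr p.1 p.2 := by
  unfold sampleCorr sampleMean
  fun_prop

lemma sampleCorr_eq_cosineSimilarity {x y : ι → ℝ} (hx : sampleMean x = 0)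
    (hy : sampleMean y = 0) : sampleCorr x y = cosineSimilarity x y := by
  simp only [sampleCorr, cosineSimilarity, dotProduct, hx, hy, sub_zero, sq]

variable {A : Matrix ι κ ℝ}

lemma sampleMean_mulVec_eq_zero (hA : 1 ᵥ* A = 0) (x : κ → ℝ) : sampleMean (A *ᵥ x) = 0 := by
  rw [sampleMean, ← one_dotProduct, dotProduct_mulVec, hA, zero_dotProduct, zero_div]

variable [DecidableEq κ]

lemma dotProduct_mulVec_mulVec_of_transpose_mul_self (hA : Aᵀ * A = 1) (x y : κ → ℝ) :
    (A *ᵥ x) ⬝ᵥ (A *ᵥ y) = x ⬝ᵥ y := by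
  rw [dotProduct_mulVec, vecMul_mulVec, hA, vecMul_one]

lemma cosineSimilarity_mulVec (hA : Aᵀ * A = 1) (x y : κ → ℝ) :
    cosineSimilarity (A *ᵥ x) (A *ᵥ y) = cosineSimilarity x y := by
  simp only [cosineSimilarity, dotProduct_mulVec_mulVec_of_transpose_mul_self hA]

lemma sampleCorr_mulVec (hA : Aᵀ * A = 1) (hA_one : 1 ᵥ* A = 0) (x y : κ → ℝ) :
    sampleCorr (A *ᵥ x) (A *ᵥ y) = cosineSimilarity x y := by
  rw [sampleCorr_eq_cosineSimilarity (sampleMean_mulVec_eq_zero hA_one x)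
    (sampleMean_mulVec_eq_zero hA_one y), cosineSimilarity_mulVec hA]

lemma exists_orthonormal_columns_vecMul_eq_zero (w : ι → ℝ)
    (hκ : Fintype.card κ ≤ Fintype.card ι - 1) :
    ∃ A : Matrix ι κ ℝ, Aᵀ * A = 1 ∧ w ᵥ* A = 0 := by
  have hfinrank := finrank_sub_one_le_finrank_orthogonal_span_singleton (𝕜 := ℝ) (WithLp.toLp 2 w)
  rw [finrank_euclideanSpace] at hfinrank
  obtain ⟨v, hv, hvw⟩ := exists_orthonormal_mem_of_card_le_finrank (hκ.trans hfinrank)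
  refine ⟨Matrix.of fun i k => v k i, ?_, ?_⟩
  · ext j k
    rw [one_apply, ← orthonormal_iff_ite.1 hv j k, EuclideanSpace.inner_eq_star_dotProduct,
      dotProduct_comm]
    rfl
  · ext k
    have hwk := Submodule.mem_orthogonal_singleton_iff_inner_right.1 (hvw k)
    rwa [EuclideanSpace.inner_eq_star_dotProduct, dotProduct_comm] at hwk

end CosineSimilarity

section Gaussian

variable {κ : Type*} [Fintype κ]

lemma map_dotProduct_pi_gaussianReal (a : κ → ℝ) :
    (Measure.pi fun _ : κ => gaussianReal 0 1).map (a ⬝ᵥ ·) =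
      gaussianReal 0 (a ⬝ᵥ a).toNNReal := by
  let L : StrongDual ℝ (EuclideanSpace ℝ κ) := innerSL ℝ (WithLp.toLp 2 a)
  have hL : (a ⬝ᵥ ·) = L ∘ WithLp.toLp 2 := by
    ext x
    simp [L, PiLp.inner_apply, dotProduct, mul_comm]
  have hL_norm : ‖L‖ ^ 2 = a ⬝ᵥ a := by
    rw [innerSL_apply_norm, ← real_inner_self_eq_norm_sq, EuclideanSpace.inner_toLp_toLp,
      star_trivial]
  rw [hL, ← Measure.map_map (by fun_prop) (by fun_prop), map_pi_eq_stdGaussian,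
    IsGaussian.map_eq_gaussianReal, integral_strongDual_stdGaussian, variance_dual_stdGaussian,
    hL_norm]

lemma isCenteredGaussian_map_mulVec {n : ℕ} (A : Matrix (Fin n) κ ℝ) :
    IsCenteredGaussian ((Measure.pi fun _ : κ => gaussianReal 0 1).map (A *ᵥ ·)) (A * Aᵀ) := by
  have hA : Measurable (A *ᵥ ·) := by fun_prop
  refine ⟨Measure.isProbabilityMeasure_map hA.aemeasurable, fun a => ?_⟩
  have hcomp : (fun x : Fin n → ℝ => ∑ i, a i * x i) ∘ (A *ᵥ ·) = ((a ᵥ* A) ⬝ᵥ ·) :=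
    funext fun x => dotProduct_mulVec a A x
  rw [Measure.map_map (by fun_prop) hA, hcomp, map_dotProduct_pi_gaussianReal,
    ← mulVec_mulVec, dotProduct_mulVec, mulVec_transpose]

lemma integral_sq_gaussianReal_zero (v : NNReal) : ∫ x, x ^ 2 ∂gaussianReal 0 v = v := by
  rw [← variance_of_integral_eq_zero aemeasurable_id' integral_id_gaussianReal,
    variance_fun_id_gaussianReal]

end Gaussian

section ConvergenceInDistribution

variable {Ω' : Type*} {mΩ' : MeasurableSpace Ω'} {P' : Measure Ω'} [IsProbabilityMeasure P']

lemma tendstoInDistribution_map {Ω : ℕ → Type*} [∀ n, MeasurableSpace (Ω n)]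
    {P : ∀ n, Measure (Ω n)} [∀ n, IsProbabilityMeasure (P n)] {X : ∀ n, Ω n → ℝ} {Z : Ω' → ℝ}
    (h : MeasureTheory.TendstoInDistribution X atTop Z P P') :
    TendstoInDistribution (fun n => (P n).map (X n)) (P'.map Z) :=
  ProbabilityMeasure.tendsto_iff_forall_integral_tendsto.1 h.tendsto

lemma tendstoInDistribution_comp {ι κ E : Type*} [TopologicalSpace E] [MeasurableSpace E]
    [OpensMeasurableSpace E] {Ω : ι → Type*} [∀ i, MeasurableSpace (Ω i)]
    {P : ∀ i, Measure (Ω i)} [∀ i, IsProbabilityMeasure (P i)] {X : ∀ i, Ω i → E} {Z : Ω' → E}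
    {p : Filter ι} {q : Filter κ} (h : MeasureTheory.TendstoInDistribution X p Z P P')
    {u : κ → ι} (hu : Tendsto u q p) :
    MeasureTheory.TendstoInDistribution (fun k => X (u k)) q Z (fun k => P (u k)) P' :=
  ⟨fun k => h.forall_aemeasurable (u k), h.aemeasurable_limit, h.tendsto.comp hu⟩

lemma tendstoInDistribution_mul_of_ae_tendsto_const {Ω : Type*} {mΩ : MeasurableSpace Ω}
    {P : Measure Ω} [IsProbabilityMeasure P] {X W : ℕ → Ω → ℝ} {Z : Ω' → ℝ} {a : ℝ}
    (h : MeasureTheory.TendstoInDistribution X atTop Z (fun _ => P) P')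
    (hW : ∀ n, Measurable (W n)) (ha : ∀ᵐ ω ∂P, Tendsto (W · ω) atTop (𝓝 a)) :
    MeasureTheory.TendstoInDistribution (fun n ω => X n ω * W n ω) atTop (fun ω => Z ω * a)
      (fun _ => P) P' :=
  h.continuous_comp_prodMk_of_tendstoInMeasure_const (g := fun p : ℝ × ℝ => p.1 * p.2)
    (by fun_prop) (tendstoInMeasure_of_tendsto_ae (fun n => (hW n).aestronglyMeasurable) ha)
    (fun n => (hW n).aemeasurable)

end ConvergenceInDistribution

section IID

variable {Ω Ω' : Type*} {mΩ : MeasurableSpace Ω} {mΩ' : MeasurableSpace Ω'} {P : Measure Ω}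
  {P' : Measure Ω'} {Z : Ω' → ℝ}

lemma ae_tendsto_sum_sq_div {X : ℕ → Ω → ℝ} (hindep : iIndepFun X P)
    (hident : ∀ k, IdentDistrib (X k) (X 0) P P) (hint : Integrable (fun ω => X 0 ω ^ 2) P) :
    ∀ᵐ ω ∂P, Tendsto (fun n : ℕ => (∑ k ∈ Finset.range n, X k ω ^ 2) / n) atTop
      (𝓝 (∫ ω, X 0 ω ^ 2 ∂P)) := by
  have hsq : Measurable fun x : ℝ => x ^ 2 := by fun_prop
  exact strong_law_ae_real (fun k ω => X k ω ^ 2) hint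
    (fun _ _ hij => (hindep.indepFun hij).comp hsq hsq) (fun k => (hident k).comp hsq)

lemma sqrt_mul_cosineSimilarity_eq (x y : ℕ → ℝ) (n : ℕ) :
    √n * cosineSimilarity (fun k : Fin n => x k) (fun k : Fin n => y k) =
      (√n)⁻¹ * (∑ k ∈ Finset.range n, x k * y k) *
        (√((∑ k ∈ Finset.range n, x k ^ 2) / n) * √((∑ k ∈ Finset.range n, y k ^ 2) / n))⁻¹ := by
  simp only [cosineSimilarity, dotProduct, Finset.sum_range, Real.sqrt_div' _ n.cast_nonneg, sq]
  rcases n.eq_zero_or_pos with rfl | hn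
  · simp
  · field_simp

variable [IsProbabilityMeasure P] [IsProbabilityMeasure P']

theorem tendstoInDistribution_sqrt_mul_cosineSimilarity {X Y : ℕ → Ω → ℝ}
    (hX : ∀ k, Measurable (X k)) (hY : ∀ k, Measurable (Y k))
    (hindep : iIndepFun (fun k ω => (X k ω, Y k ω)) P)
    (hident : ∀ k, IdentDistrib (fun ω => (X k ω, Y k ω)) (fun ω => (X 0 ω, Y 0 ω)) P P)
    (hX_sq : ∫ ω, X 0 ω ^ 2 ∂P = 1) (hY_sq : ∫ ω, Y 0 ω ^ 2 ∂P = 1)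
    (hXY : ∫ ω, X 0 ω * Y 0 ω ∂P = 0) (hXY_sq : ∫ ω, (X 0 ω * Y 0 ω) ^ 2 ∂P = 1)
    (hZ : HasLaw Z (gaussianReal 0 1) P') :
    MeasureTheory.TendstoInDistribution
      (fun (n : ℕ) ω => √n * cosineSimilarity (fun k : Fin n => X k ω) (fun k : Fin n => Y k ω))
      atTop Z (fun _ => P) P' := by
  have hmul : Measurable fun p : ℝ × ℝ => p.1 * p.2 := by fun_prop
  have hclt := tendstoInDistribution_inv_sqrt_mul_sum hZ (X := fun k ω => X k ω * Y k ω) hXY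
    hXY_sq (hindep.comp (fun _ => _) fun _ => hmul) (fun k => (hident k).comp hmul)
  have hX_lln := ae_tendsto_sum_sq_div (X := X) (hindep.comp (fun _ => _) fun _ => measurable_fst)
    (fun k => (hident k).comp measurable_fst) (.of_integral_ne_zero (by simp [hX_sq]))
  have hY_lln := ae_tendsto_sum_sq_div (X := Y) (hindep.comp (fun _ => _) fun _ => measurable_snd)
    (fun k => (hident k).comp measurable_snd) (.of_integral_ne_zero (by simp [hY_sq]))
  rw [hX_sq] at hX_lln
  rw [hY_sq] at hY_lln
  have hnorm : ∀ᵐ ω ∂P, Tendsto (fun n : ℕ => (√((∑ k ∈ Finset.range n, X k ω ^ 2) / n) *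
      √((∑ k ∈ Finset.range n, Y k ω ^ 2) / n))⁻¹) atTop (𝓝 1) := by
    filter_upwards [hX_lln, hY_lln] with ω hXω hYω
    simpa using (hXω.sqrt.mul hYω.sqrt).inv₀ (by simp)
  simpa only [← sqrt_mul_cosineSimilarity_eq (X · _) (Y · _), mul_one] using
    tendstoInDistribution_mul_of_ae_tendsto_const hclt (fun n => by fun_prop) hnorm

variable {l : ℕ → ℕ} {c : ℝ}

lemma tendsto_atTop_of_tendsto_div (hc : 0 < c)
    (hl : Tendsto (fun n : ℕ => (l n : ℝ) / n) atTop (𝓝 c)) : Tendsto l atTop atTop := by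
  rw [← tendsto_natCast_atTop_iff (R := ℝ)]
  refine (hl.pos_mul_atTop hc tendsto_natCast_atTop_atTop).congr' ?_
  filter_upwards [eventually_ne_atTop 0] with n hn
  field_simp

lemma tendstoInDistribution_sqrt_mul_comp {T : (m : ℕ) → Ω → ℝ}
    (hT : MeasureTheory.TendstoInDistribution (fun (m : ℕ) ω => √m * T m ω) atTop Z (fun _ => P) P')
    (hT_zero : T 0 = 0) (hc : 0 < c)
    (hl : Tendsto (fun n : ℕ => (l n : ℝ) / n) atTop (𝓝 c)) :
    MeasureTheory.TendstoInDistribution (fun (n : ℕ) ω => √n * T (l n) ω) atTop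
      (fun ω => Z ω * √c⁻¹) (fun _ => P) P' := by
  have hscale : Tendsto (fun n : ℕ => √((l n / n : ℝ)⁻¹)) atTop (𝓝 √c⁻¹) :=
    (hl.inv₀ hc.ne').sqrt
  refine (tendstoInDistribution_mul_of_ae_tendsto_const
    (tendstoInDistribution_comp hT (tendsto_atTop_of_tendsto_div hc hl))
    (fun _ => measurable_const) (ae_of_all P fun _ => hscale)).congr
      (fun n => .of_forall fun ω => ?_) .rfl
  rcases (l n).eq_zero_or_pos with hn | hn
  · simp [hn, hT_zero]
  · simp only [inv_div, Real.sqrt_div' _ (l n).cast_nonneg]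
    field_simp

end IID

section ProductMeasure

lemma map_infinitePi_prod_eq_pi_prod_pi {ι κ α β : Type*} [Fintype κ] [MeasurableSpace α]
    [MeasurableSpace β] (μ : Measure α) (ν : Measure β) [IsProbabilityMeasure μ]
    [IsProbabilityMeasure ν] {f : κ → ι} (hf : Function.Injective f) :
    (Measure.infinitePi fun _ : ι => μ.prod ν).map
        (fun ω => (fun k => (ω (f k)).1, fun k => (ω (f k)).2)) =
      (Measure.pi fun _ : κ => μ).prod (Measure.pi fun _ : κ => ν) := by
  have hmarginal := Measure.map_infinitePi_infinitePi_of_inj (P := fun _ : ι => μ.prod ν) hf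
  rw [← (measurePreserving_arrowProdEquivProdArrow α β κ (fun _ => μ) fun _ => ν).map_eq,
    ← Measure.infinitePi_eq_pi, ← hmarginal,
    Measure.map_map (MeasurableEquiv.measurable _) (by fun_prop)]
  rfl

lemma gaussianReal_map_mul_sqrt {c : ℝ} (hc : 0 ≤ c) :
    (gaussianReal 0 1).map (fun x => x * √c) = gaussianReal 0 c.toNNReal := by
  rw [gaussianReal_map_mul_const, mul_zero, mul_one]
  congr 1
  ext
  simp [Real.sq_sqrt hc, hc]

variable {μ ν : Measure ℝ} [IsProbabilityMeasure μ] [IsProbabilityMeasure ν] {l : ℕ → ℕ} {c : ℝ}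

theorem tendstoInDistribution_cosineSimilarity_pi (hμ_mean : ∫ x, x ∂μ = 0)
    (hμ_sq : ∫ x, x ^ 2 ∂μ = 1) (hν_sq : ∫ x, x ^ 2 ∂ν = 1) (hc : 0 < c)
    (hl : Tendsto (fun n : ℕ => (l n : ℝ) / n) atTop (𝓝 c)) :
    TendstoInDistribution
      (fun n => ((Measure.pi fun _ : Fin (l n) => μ).prod (Measure.pi fun _ : Fin (l n) => ν)).map
        fun p => √n * cosineSimilarity p.1 p.2)
      (gaussianReal 0 c⁻¹.toNNReal) := by
  let P : Measure (ℕ → ℝ × ℝ) := Measure.infinitePi fun _ => μ.prod ν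
  have hP (k : ℕ) : P.map (fun ω => ω k) = μ.prod ν := Measure.infinitePi_map_eval _ k
  have hmoment {f g : ℝ → ℝ} {a b : ℝ} (hf : Measurable f) (hg : Measurable g)
      (hfa : ∫ x, f x ∂μ = a) (hgb : ∫ y, g y ∂ν = b) : ∫ ω, f (ω 0).1 * g (ω 0).2 ∂P = a * b := by
    rw [← hfa, ← hgb, ← integral_prod_mul, ← hP 0,
      integral_map (measurable_pi_apply 0).aemeasurable]
    exact Measurable.aestronglyMeasurable (by fun_prop)
  have hcos := tendstoInDistribution_sqrt_mul_cosineSimilarity (P := P)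
    (X := fun k ω => (ω k).1) (Y := fun k ω => (ω k).2) (Z := id) (by fun_prop) (by fun_prop)
    (iIndepFun_infinitePi (X := fun _ p => p) fun _ => measurable_id)
    (fun k => ⟨by fun_prop, by fun_prop, (hP k).trans (hP 0).symm⟩)
    (by simpa using hmoment (g := 1) (by fun_prop) measurable_one hμ_sq (by simp))
    (by simpa using hmoment (f := 1) measurable_one (by fun_prop) (by simp) hν_sq)
    ((hmoment measurable_id measurable_id hμ_mean rfl).trans (zero_mul _))
    (by simpa [mul_pow] using hmoment (by fun_prop) (by fun_prop) hμ_sq hν_sq)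
    HasLaw.id
  have hlimit := tendstoInDistribution_map (tendstoInDistribution_sqrt_mul_comp
    (T := fun m (ω : ℕ → ℝ × ℝ) => cosineSimilarity (fun k : Fin m => (ω k).1) fun k => (ω k).2)
    hcos (by ext; simp [cosineSimilarity]) hc hl)
  simp only [id_eq, gaussianReal_map_mul_sqrt (inv_nonneg.2 hc.le)] at hlimit
  convert hlimit using 2 with n
  rw [← map_infinitePi_prod_eq_pi_prod_pi μ ν Fin.val_injective, Measure.map_map
    (measurable_cosineSimilarity.const_mul _) (by fun_prop)]
  rfl

theorem tendstoInDistribution_sampleCorr_mulVec {A : (n : ℕ) → Matrix (Fin n) (Fin (l n)) ℝ}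
    (hA : ∀ n, (A n)ᵀ * A n = 1) (hA_one : ∀ n, 1 ᵥ* A n = 0) (hμ_mean : ∫ x, x ∂μ = 0)
    (hμ_sq : ∫ x, x ^ 2 ∂μ = 1) (hν_sq : ∫ x, x ^ 2 ∂ν = 1) (hc : 0 < c)
    (hl : Tendsto (fun n : ℕ => (l n : ℝ) / n) atTop (𝓝 c)) :
    TendstoInDistribution
      (fun n => (((Measure.pi fun _ => μ).map (A n *ᵥ ·)).prod
        ((Measure.pi fun _ => ν).map (A n *ᵥ ·))).map fun p => √n * sampleCorr p.1 p.2)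
      (gaussianReal 0 c⁻¹.toNNReal) := by
  convert tendstoInDistribution_cosineSimilarity_pi hμ_mean hμ_sq hν_sq hc hl using 2 with n
  have hAn : Measurable (A n *ᵥ ·) := by fun_prop
  rw [Measure.map_prod_map _ _ hAn hAn,
    Measure.map_map (measurable_sampleCorr.const_mul _) (hAn.prodMap hAn)]
  congr 1 with p
  simp only [Function.comp_apply, Prod.map, sampleCorr_mulVec (hA n) (hA_one n)]

end ProductMeasure

/-- The multiplicity of the eigenvalue `1` of `Σₙ`: the paper's `⌈n/σ²⌉`, capped at the dimension
`n - 1` of the orthogonal complement of the all-ones vector. -/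
def eigenvalueCount (σ2 : ℝ) (n : ℕ) : ℕ := min ⌈σ2⁻¹ * n⌉₊ (n - 1)

lemma eigenvalueCount_le (σ2 : ℝ) (n : ℕ) : eigenvalueCount σ2 n ≤ n - 1 := min_le_right _ _

lemma tendsto_natCast_pred_div : Tendsto (fun n : ℕ => ((n - 1 : ℕ) : ℝ) / n) atTop (𝓝 1) := by
  have h : Tendsto (fun n : ℕ => 1 - (n : ℝ)⁻¹) atTop (𝓝 1) := by
    simpa using tendsto_inv_atTop_nhds_zero_nat (𝕜 := ℝ) |>.const_sub 1
  refine h.congr' ?_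
  filter_upwards [eventually_gt_atTop 0] with n hn
  rw [Nat.cast_pred hn]
  field_simp

lemma tendsto_eigenvalueCount_div {σ2 : ℝ} (hσ2 : 1 ≤ σ2) :
    Tendsto (fun n : ℕ => (eigenvalueCount σ2 n : ℝ) / n) atTop (𝓝 σ2⁻¹) := by
  have hceil : Tendsto (fun n : ℕ => (⌈σ2⁻¹ * n⌉₊ : ℝ) / n) atTop (𝓝 σ2⁻¹) :=
    (tendsto_nat_ceil_mul_div_atTop (by positivity)).comp tendsto_natCast_atTop_atTop
  have hmin := hceil.min tendsto_natCast_pred_div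
  rw [min_eq_left (inv_le_one_of_one_le₀ hσ2)] at hmin
  simpa only [eigenvalueCount, Nat.cast_min, min_div_div_right (Nat.cast_nonneg _)] using hmin

/-- **(Arbitrary limiting variance for the sample correlation).** For every `σ² ≥ 1` there is
a sequence of positive semidefinite covariance matrices `Σₙ` such that, for independent
`X, Y ~ N(0, Σₙ)`, the sample correlation satisfies `√n ρₙ →d N(0, σ²)`. -/
theorem exists_cov_with_inflated_correlation (σ2 : ℝ) (hσ2 : 1 ≤ σ2) :
    ∃ (S : (n : ℕ) → Matrix (Fin n) (Fin n) ℝ) (μ ν : (n : ℕ) → Measure (Fin n → ℝ)),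
      (∀ n, (S n).PosSemidef) ∧
      (∀ n, IsCenteredGaussian (μ n) (S n)) ∧
      (∀ n, IsCenteredGaussian (ν n) (S n)) ∧
      TendstoInDistribution
        (fun n => Measure.map
          (fun p : (Fin n → ℝ) × (Fin n → ℝ) => Real.sqrt n * sampleCorr p.1 p.2)
          ((μ n).prod (ν n)))
        (gaussianReal 0 (Real.toNNReal σ2)) := by
  choose A hA hA_one using fun n => exists_orthonormal_columns_vecMul_eq_zero
    (ι := Fin n) (κ := Fin (eigenvalueCount σ2 n)) 1
    (by simpa only [Fintype.card_fin] using eigenvalueCount_le σ2 n)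
  refine ⟨fun n => A n * (A n)ᵀ,
    fun n => (Measure.pi fun _ => gaussianReal 0 1).map (A n *ᵥ ·),
    fun n => (Measure.pi fun _ => gaussianReal 0 1).map (A n *ᵥ ·),
    fun n => posSemidef_self_mul_conjTranspose (A n),
    fun n => isCenteredGaussian_map_mulVec (A n),
    fun n => isCenteredGaussian_map_mulVec (A n), ?_⟩
  simpa only [inv_inv] using tendstoInDistribution_sampleCorr_mulVec hA hA_one
    integral_id_gaussianReal (integral_sq_gaussianReal_zero 1) (integral_sq_gaussianReal_zero 1)
    (by positivity) (tendsto_eigenvalueCount_div hσ2)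

end
end
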